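/- arXiv:2102.00480 — 3 statements merged into one kernel-verified Lean document; each statement's English description precedes it below -/
import Mathlib

section
/- In the orthogonal case: if n ≥ 3, or if n = 2 and det j ∉ -F^{×2}, then SX^j consists of exactly two SG^j(E)-orbits; and if n ≥ 3, or if n = 2 and det j ∉ -ı²·F^{×2}, then X^j \ SX^j consists of exactly two SG^j(E)-orbits. -/
open Matrix

namespace OrthPair

variable {E : Type} [Field E]

/-- `g ∈ G^j(E) = {g ∈ GL_n(E) : gᵀ j g = j}` (orthogonal case). -/
def Gj {n : ℕ} (j g : Matrix (Fin n) (Fin n) E) : Prop :=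
  IsUnit g ∧ gᵀ * j * g = j

/-- `x ∈ X^j = {x ∈ G^j(E) : x·σ(x) = 1}`. -/
def Xj {n : ℕ} (σ : E → E) (j x : Matrix (Fin n) (Fin n) E) : Prop :=
  Gj j x ∧ x * x.map σ = 1

/-- `x ∈ SX^j = X^j ∩ SL_n(E)`. -/
def SXj {n : ℕ} (σ : E → E) (j x : Matrix (Fin n) (Fin n) E) : Prop :=
  Xj σ j x ∧ x.det = 1

/-- `x'` lies in the `SG^j(E) = G^j(E) ∩ SL_n(E)`-orbit of `x` for twisted conjugation
`g·x = g x σ(g)⁻¹`. -/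
def orbSG {n : ℕ} (σ : E → E) (j x x' : Matrix (Fin n) (Fin n) E) : Prop :=
  ∃ g, Gj j g ∧ g.det = 1 ∧ x' = g * x * (g.map σ)⁻¹

end OrthPair

open OrthPair


namespace OP

structure LV (p : ℕ) [Fact p.Prime] (K : Type*) [Field K] [Algebra ℚ_[p] K] (ν : K → ℝ) : Prop where
  zero : ν 0 = 0
  one : ν 1 = 1
  mul : ∀ x y, ν (x * y) = ν x * ν y
  add : ∀ x y, ν (x + y) ≤ max (ν x) (ν y)
  pos : ∀ x, x ≠ 0 → 0 < ν x
  neg : ∀ x, ν (-x) = ν x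
  ext : ∀ x : ℚ_[p], ν (algebraMap ℚ_[p] K x) = ‖x‖
  int : ∃ b : Module.Basis (Fin (Module.finrank ℚ_[p] K)) ℚ_[p] K,
    ∀ x, ν x ≤ 1 ↔ ∀ i, ‖b.repr x i‖ ≤ 1
  hens : ∀ c, ν c < 1 → ∃ z, z + z * z = c ∧ ν z ≤ ν c

theorem hens_aux {K : Type*} [NormedField K] [CompleteSpace K] [IsUltrametricDist K] (c : K)
    (hc : ‖c‖ < 1) : ∃ z, z + z * z = c ∧ ‖z‖ ≤ ‖c‖ := by
  let f : ℕ → K := fun n => Nat.rec 0 (fun _ z => c - z * z) n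
  have f1 : ∀ n, f (n+1) = c - f n * f n := fun n => rfl
  have hb : ∀ n, ‖f n‖ ≤ ‖c‖ := by
    intro n
    induction n with
    | zero => simp [f]
    | succ n ih =>
      rw [f1]
      rw [sub_eq_add_neg]
      refine (IsUltrametricDist.norm_add_le_max _ _).trans (max_le le_rfl ?_)
      rw [norm_neg, norm_mul]
      nlinarith [norm_nonneg (f n)]
  have hd : ∀ n, dist (f n) (f (n+1)) ≤ 1 * ‖c‖ ^ n := by
    intro n
    induction n with
    | zero => 
      rw [dist_eq_norm, f1]; simp [f]; exact hc.le
    | succ n ih =>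
      rw [dist_eq_norm] at ih ⊢
      have : f (n+1) - f (n+1+1) = (f (n+1) - f n) * (f (n+1) + f n) := by
        rw [f1 (n+1)]; nth_rewrite 1 [f1 n]; ring
      rw [this, norm_mul, norm_sub_rev, pow_succ, ← mul_assoc]
      have h2 : ‖f (n+1) + f n‖ ≤ ‖c‖ :=
        (IsUltrametricDist.norm_add_le_max _ _).trans (max_le (hb (n+1)) (hb n))
      exact mul_le_mul ih h2 (norm_nonneg _) (by positivity)
  obtain ⟨z, hz⟩ := cauchySeq_tendsto_of_complete (cauchySeq_of_le_geometric _ _ hc hd)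
  refine ⟨z, ?_, le_of_tendsto hz.norm (Filter.Eventually.of_forall hb)⟩
  have h1 := (Filter.tendsto_add_atTop_iff_nat 1).2 hz
  have h2 : Filter.Tendsto (fun n => c - f n * f n) Filter.atTop (nhds (c - z * z)) :=
    tendsto_const_nhds.sub (hz.mul hz)
  have := tendsto_nhds_unique h1 h2
  linear_combination this


theorem int_basis (p : ℕ) [Fact p.Prime] (K : Type*) [Field K] [Algebra ℚ_[p] K]
    [FiniteDimensional ℚ_[p] K] : ∃ b : Module.Basis (Fin (Module.finrank ℚ_[p] K)) ℚ_[p] K,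
    ∀ x, spectralNorm ℚ_[p] K x ≤ 1 ↔ ∀ i, ‖b.repr x i‖ ≤ 1 := by
  let _ : Algebra ℤ_[p] K := ((algebraMap ℚ_[p] K).comp (algebraMap ℤ_[p] ℚ_[p])).toAlgebra
  have : IsScalarTower ℤ_[p] ℚ_[p] K := IsScalarTower.of_algebraMap_eq (fun x => rfl)
  have hint : ∀ x : K, spectralNorm ℚ_[p] K x ≤ 1 ↔ IsIntegral ℤ_[p] x := by
    intro x
    have hx : IsIntegral ℚ_[p] x := Algebra.IsIntegral.isIntegral x
    have h1 : spectralNorm ℚ_[p] K x ≤ 1 ↔ ∀ n : ℕ, ‖(minpoly ℚ_[p] x).coeff n‖ ≤ 1 :=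
      spectralValue_le_one_iff (minpoly.monic hx)
    rw [h1]
    constructor
    · intro h
      have : minpoly ℚ_[p] x ∈ Polynomial.lifts (algebraMap ℤ_[p] ℚ_[p]) := by
        rw [Polynomial.lifts_iff_coeff_lifts]
        intro n
        exact ⟨⟨_, h n⟩, rfl⟩
      obtain ⟨q, hq, -, hqm⟩ := Polynomial.lifts_and_degree_eq_and_monic this (minpoly.monic hx)
      refine ⟨q, hqm, ?_⟩
      have := minpoly.aeval ℚ_[p] x
      rw [← hq, Polynomial.aeval_map_algebraMap] at this
      exact this
    · intro h n
      rw [minpoly.isIntegrallyClosed_eq_field_fractions' ℚ_[p] h, Polynomial.coeff_map]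
      exact ((minpoly ℤ_[p] x).coeff n).2
  let C := integralClosure ℤ_[p] K
  have : Module.IsTorsionFree ℤ_[p] K := .trans_faithfulSMul ℤ_[p] ℚ_[p] K
  have : Module.Free ℤ_[p] C := IsIntegralClosure.module_free ℤ_[p] ℚ_[p] K C
  have : IsNoetherian ℤ_[p] C := IsIntegralClosure.isNoetherian ℤ_[p] ℚ_[p] K C
  have : IsLocalization (Algebra.algebraMapSubmonoid C (nonZeroDivisors ℤ_[p])) K :=
    IsIntegralClosure.isLocalization ℤ_[p] ℚ_[p] K C
  have hr : Module.finrank ℤ_[p] C = Module.finrank ℚ_[p] K :=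
    IsIntegralClosure.rank ℤ_[p] ℚ_[p] K C
  let b0 := (Module.finBasis ℤ_[p] C).reindex (finCongr hr)
  refine ⟨Module.Basis.localizationLocalization ℚ_[p] (nonZeroDivisors ℤ_[p]) K b0, fun x => ?_⟩
  rw [hint]
  constructor
  · intro h i
    have := Module.Basis.localizationLocalization_repr_algebraMap ℚ_[p] (nonZeroDivisors ℤ_[p]) K b0
      ⟨x, h⟩ i
    change (Module.Basis.localizationLocalization ℚ_[p] (nonZeroDivisors ℤ_[p]) K b0).repr x i = _ at this
    rw [this]
    exact (b0.repr ⟨x, h⟩ i).2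
  · intro h
    rw [← (Module.Basis.localizationLocalization ℚ_[p] (nonZeroDivisors ℤ_[p]) K b0).sum_repr x]
    refine IsIntegral.sum _ fun i _ => ?_
    rw [Module.Basis.localizationLocalization_apply, Algebra.smul_def]
    refine IsIntegral.mul ?_ (b0 i).2
    exact isIntegral_algebraMap (R := ℤ_[p]) (A := K) (x := ⟨_, h i⟩)

theorem exists_LV (p : ℕ) [Fact p.Prime] (K : Type*) [Field K] [Algebra ℚ_[p] K]
    [FiniteDimensional ℚ_[p] K] : ∃ ν : K → ℝ, LV p K ν := by
  have hb := int_basis p K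
  let _ := spectralNorm.normedField ℚ_[p] K
  have : CompleteSpace K := spectralNorm.completeSpace ℚ_[p] K
  have : IsUltrametricDist K := IsUltrametricDist.isUltrametricDist_of_isNonarchimedean_norm
    (isNonarchimedean_spectralNorm (K := ℚ_[p]) (L := K))
  exact ⟨fun x => ‖x‖, norm_zero, norm_one, norm_mul, IsUltrametricDist.norm_add_le_max,
    fun x hx => norm_pos_iff.2 hx, norm_neg, fun x => spectralNorm_extends x, hb, hens_aux⟩

end OP

namespace OP

theorem grp_idx {A : Type*} [CommGroup A] (W : Subgroup A) (hW : W.index ≠ 0)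
    (h2 : ∀ w ∈ W, w ^ 2 = 1 → w = 1) :
    (powMonoidHom 2 : A →* A).range.index =
      (W.map (powMonoidHom 2)).relIndex W * Nat.card (powMonoidHom 2 : A →* A).ker := by
  set s : A →* A := powMonoidHom 2
  have hle : W.map s ≤ W := by
    rintro _ ⟨w, hw, rfl⟩
    exact W.pow_mem hw 2
  have e1 := Subgroup.relIndex_mul_index hle
  have hle2 : W.map s ≤ s.range := Subgroup.map_le_range s W
  have e2 := Subgroup.relIndex_mul_index hle2
  have e3 : (W.map s).relIndex s.range = (W ⊔ s.ker).index := by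
    have := Subgroup.relIndex_map_map s W ⊤
    rw [← MonoidHom.range_eq_map] at this
    simpa using this
  have e4 : W.relIndex (W ⊔ s.ker) * (W ⊔ s.ker).index = W.index :=
    Subgroup.relIndex_mul_index le_sup_left
  have e5 : W.relIndex (W ⊔ s.ker) = Nat.card s.ker := by
    rw [Subgroup.relIndex_sup_left, ← Subgroup.inf_relIndex_right]
    have : W ⊓ s.ker = ⊥ := by
      rw [eq_bot_iff]
      rintro x ⟨hx, hx2⟩
      exact h2 x hx hx2
    rw [this, Subgroup.relIndex_bot_left]
  rw [e5] at e4
  have hne : (W ⊔ s.ker).index ≠ 0 := by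
    intro h; rw [h, mul_zero] at e4; exact hW e4.symm
  rw [e3] at e2
  rw [← e4, ← e2, ← mul_assoc, mul_comm] at e1
  exact (Nat.eq_of_mul_eq_mul_left (Nat.pos_of_ne_zero hne) e1).symm

theorem finite_quot (p : ℕ) [Fact p.Prime] (m : ℤ_[p]) (hm : m ≠ 0) :
    Finite (ℤ_[p] ⧸ Ideal.span {m}) := by
  obtain ⟨n, hn⟩ := PadicInt.ideal_eq_span_pow_p (s := Ideal.span {m}) (by simpa using hm)
  rw [hn, ← PadicInt.ker_toZModPow]
  have : NeZero (p ^ n) := ⟨pow_ne_zero _ (Fact.out : p.Prime).ne_zero⟩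
  exact Finite.of_injective _ (RingHom.kerLift_injective (PadicInt.toZModPow (p := p) n))

variable {p : ℕ} [Fact p.Prime] {K : Type*} [Field K] [Algebra ℚ_[p] K] {ν : K → ℝ}

namespace LV

theorem sub (h : LV p K ν) (x y : K) : ν (x - y) ≤ max (ν x) (ν y) := by
  rw [sub_eq_add_neg, ← h.neg y]; exact h.add _ _

theorem nonneg (h : LV p K ν) (x : K) : 0 ≤ ν x := by
  by_cases hx : x = 0
  · rw [hx, h.zero]
  · exact (h.pos x hx).le

theorem inv (h : LV p K ν) (x : K) (hx : x ≠ 0) : ν x⁻¹ = (ν x)⁻¹ := by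
  have := h.mul x x⁻¹
  rw [mul_inv_cancel₀ hx, h.one] at this
  exact eq_inv_of_mul_eq_one_right this.symm

/-- unit ball -/
def O (h : LV p K ν) : AddSubgroup K where
  carrier := {x | ν x ≤ 1}
  zero_mem' := by simp [h.zero]
  add_mem' := fun {a b} ha hb => (h.add a b).trans (max_le ha hb)
  neg_mem' := fun {a} ha => by simpa [h.neg] using ha

theorem zint (h : LV p K ν) (m : ℤ_[p]) : ν (algebraMap ℚ_[p] K m) ≤ 1 := by
  rw [h.ext]; exact m.2

theorem exists_rho (h : LV p K ν) (m : ℤ_[p]) (hm : m ≠ 0) :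
    ∃ ρ : h.O →+ (Fin (Module.finrank ℚ_[p] K) → ℤ_[p] ⧸ Ideal.span {m}),
      Function.Surjective ρ ∧ ∀ x : h.O, ρ x = 0 ↔ ν x ≤ ‖m‖ := by
  obtain ⟨b, hb⟩ := h.int
  let c : h.O →+ (Fin (Module.finrank ℚ_[p] K) → ℤ_[p]) :=
    { toFun := fun x i => ⟨b.repr x i, (hb x).1 x.2 i⟩
      map_zero' := by ext i; simp
      map_add' := by intro x y; ext i; simp; rfl }
  have hc : ∀ x i, ((c x i : ℤ_[p]) : ℚ_[p]) = b.repr x i := fun x i => rfl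
  refine ⟨(AddMonoidHom.compLeft (Ideal.Quotient.mk (Ideal.span {m})).toAddMonoidHom _).comp c,
    ?_, ?_⟩
  · intro t
    choose s hs using fun i => Ideal.Quotient.mk_surjective (t i)
    have hr : ∀ i, b.repr (∑ i, (s i : ℚ_[p]) • b i) i = s i := by
      intro i; rw [b.repr_sum_self]
    refine ⟨⟨∑ i, (s i : ℚ_[p]) • b i, ?_⟩, ?_⟩
    · change ν _ ≤ 1
      rw [hb]; intro i; rw [hr]; exact (s i).2
    · ext i
      rw [← hs i]
      change Ideal.Quotient.mk _ (c _ i) = _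
      congr 1
      apply Subtype.ext
      rw [hc, hr]
  · intro x
    have hm' : (m : ℚ_[p]) ≠ 0 := by simpa using hm
    have hmK : algebraMap ℚ_[p] K m ≠ 0 := by simpa using hm
    have e : ν x ≤ ‖m‖ ↔ ν ((m : ℚ_[p])⁻¹ • (x : K)) ≤ 1 := by
      rw [Algebra.smul_def, map_inv₀, h.mul, h.inv _ hmK, h.ext, inv_mul_le_iff₀ (norm_pos_iff.2 hm'),
        mul_one]; rfl
    rw [e, hb, funext_iff]
    refine forall_congr' fun i => ?_
    change Ideal.Quotient.mk _ (c x i) = 0 ↔ _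
    rw [Ideal.Quotient.eq_zero_iff_mem, Ideal.mem_span_singleton, map_smul, Finsupp.smul_apply, ← hc,
      smul_eq_mul, norm_mul, norm_inv, inv_mul_le_iff₀ (norm_pos_iff.2 hm'), mul_one]
    constructor
    · rintro ⟨y, hy⟩
      rw [hy, PadicInt.coe_mul, norm_mul]
      exact mul_le_of_le_one_right (norm_nonneg _) y.2
    · intro hy
      refine ⟨⟨(c x i : ℚ_[p]) / m, ?_⟩, ?_⟩
      · rw [norm_div]; exact div_le_one_of_le₀ hy (norm_nonneg _)
      · apply Subtype.ext
        change (c x i : ℚ_[p]) = (m : ℚ_[p]) * ((c x i : ℚ_[p]) / m)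
        field_simp

end LV
end OP

namespace OP
variable {p : ℕ} [Fact p.Prime] {K : Type*} [Field K] [Algebra ℚ_[p] K] {ν : K → ℝ}
namespace LV

theorem char0 (_h : LV p K ν) : CharZero K :=
  charZero_of_injective_algebraMap (algebraMap ℚ_[p] K).injective

theorem nu2 (h : LV p K ν) : ν 2 = ‖(2 : ℤ_[p])‖ := by
  have := h.ext ((2 : ℤ_[p]) : ℚ_[p])
  have e : algebraMap ℚ_[p] K ((2 : ℤ_[p]) : ℚ_[p]) = 2 := by
    rw [show ((2 : ℤ_[p]) : ℚ_[p]) = 2 from rfl, map_ofNat]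
  rw [e] at this
  exact this

theorem nu2_le (h : LV p K ν) : ν 2 ≤ 1 := by
  rw [nu2 h]; exact (2 : ℤ_[p]).2

theorem nup (h : LV p K ν) : ν p = (p : ℝ)⁻¹ := by
  have := h.ext p
  simpa using this

theorem nup_lt (h : LV p K ν) : ν p < 1 := by
  rw [h.nup]
  exact inv_lt_one_of_one_lt₀ (by exact_mod_cast (Fact.out : p.Prime).one_lt)

theorem p_ne (h : LV p K ν) : (p : K) ≠ 0 := by
  have := h.char0
  exact_mod_cast (Fact.out : p.Prime).ne_zero

theorem two_ne (h : LV p K ν) : (2 : K) ≠ 0 := by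
  have := h.char0
  exact two_ne_zero

theorem nu4p (h : LV p K ν) : ν (4 * p) = ν 2 * ν 2 * ν p := by
  rw [← h.mul, ← h.mul]; norm_num

theorem nu4p_pos (h : LV p K ν) : 0 < ν (4 * p) := by
  rw [h.nu4p]
  have := h.pos 2 h.two_ne
  have := h.pos p h.p_ne
  positivity

theorem nu4p_le (h : LV p K ν) : ν (4 * p) ≤ ν 2 := by
  rw [h.nu4p, mul_assoc]
  refine mul_le_of_le_one_right (h.nonneg _) (mul_le_one₀ h.nu2_le (h.nonneg _) h.nup_lt.le)

theorem nu4p_lt (h : LV p K ν) : ν (4 * p) < 1 := by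
  rw [h.nu4p]
  refine lt_of_le_of_lt (mul_le_of_le_one_left (h.nonneg _) (mul_le_one₀ h.nu2_le (h.nonneg _) h.nu2_le)) h.nup_lt

theorem nu_one_unit (h : LV p K ν) (u : K) (hu : ν (u - 1) ≤ ν (4 * p)) : ν u = 1 := by
  have h1 := hu.trans_lt h.nu4p_lt
  apply le_antisymm
  · have := h.add (u - 1) 1
    rw [sub_add_cancel, h.one] at this
    exact this.trans (max_le h1.le le_rfl)
  · have := h.sub u (u - 1)
    rw [sub_sub_cancel, h.one] at this
    rcases le_max_iff.1 this with h | h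
    · exact h
    · linarith

def W (h : LV p K ν) : Subgroup Kˣ where
  carrier := {u | ν (u - 1) ≤ ν (4 * p)}
  one_mem' := by simp [h.zero, h.nu4p_pos.le]
  mul_mem' := fun {a b} ha hb => by
    have e : ((a * b : Kˣ) : K) - 1 = (a - 1) * b + (b - 1) := by push_cast; ring
    change ν (((a * b : Kˣ) : K) - 1) ≤ _
    rw [e]
    refine (h.add _ _).trans (max_le ?_ hb)
    rw [h.mul, h.nu_one_unit b hb, mul_one]; exact ha
  inv_mem' := fun {a} ha => by
    have e : ((a⁻¹ : Kˣ) : K) - 1 = - ((a - 1) * (a : K)⁻¹) := by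
      have := a.ne_zero
      push_cast; field_simp; ring
    change ν (((a⁻¹ : Kˣ) : K) - 1) ≤ _
    rw [e, h.neg, h.mul, h.inv _ a.ne_zero, h.nu_one_unit a ha, inv_one, mul_one]
    exact ha

theorem exists_theta (h : LV p K ν) :
    ∃ θ : h.W →* Multiplicative (Fin (Module.finrank ℚ_[p] K) → ℤ_[p] ⧸ Ideal.span {(2 : ℤ_[p])}),
      Function.Surjective θ ∧ θ.ker = (powMonoidHom 2 : h.W →* h.W).range := by
  obtain ⟨ρ, hs, hk⟩ := h.exists_rho 2 two_ne_zero
  have h4 : (4 * p : K) ≠ 0 := by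
    intro h0; have := h.nu4p_pos; rw [h0, h.zero] at this; exact lt_irrefl _ this
  have hO : ∀ x, ν x ≤ ν (4 * p) → (4 * p : K)⁻¹ * x ∈ h.O := by
    intro x hx
    change ν _ ≤ 1
    rw [h.mul, h.inv _ h4, inv_mul_le_iff₀ h.nu4p_pos, mul_one]; exact hx
  let θ : h.W →* Multiplicative (Fin (Module.finrank ℚ_[p] K) → ℤ_[p] ⧸ Ideal.span {(2 : ℤ_[p])}) :=
    { toFun := fun w => Multiplicative.ofAdd (ρ ⟨(4 * p : K)⁻¹ * (w.1 - 1), hO _ w.2⟩)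
      map_one' := by
        rw [ofAdd_eq_one, hk]
        simp [h.zero]
      map_mul' := by
        intro u v
        rw [← ofAdd_add, ← map_add]
        congr 1
        rw [← sub_eq_zero, ← map_sub, hk, ← h.nu2]
        have e : (4 * p : K)⁻¹ * (((u * v : h.W) : Kˣ) - 1) - ((4 * p : K)⁻¹ * (u.1 - 1) +
          (4 * p : K)⁻¹ * (v.1 - 1)) = (4 * p : K)⁻¹ * ((u.1 - 1) * (v.1 - 1)) := by
          push_cast; ring
        change ν ((4 * p : K)⁻¹ * (((u * v : h.W) : Kˣ) - 1) - ((4 * p : K)⁻¹ * (u.1 - 1) +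
          (4 * p : K)⁻¹ * (v.1 - 1))) ≤ _
        rw [e, h.mul, h.inv _ h4, inv_mul_le_iff₀ h.nu4p_pos, h.mul]
        exact mul_le_mul u.2 (le_trans v.2 h.nu4p_le) (h.nonneg _) (h.nonneg _) }
  have hθ : ∀ w, θ w = 1 ↔ ν (w.1 - 1) ≤ ν (4 * p) * ν 2 := by
    intro w
    change Multiplicative.ofAdd (ρ ⟨(4 * p : K)⁻¹ * (w.1 - 1), hO _ w.2⟩) = 1 ↔ _
    rw [ofAdd_eq_one, hk, ← h.nu2]
    change ν ((4 * p : K)⁻¹ * (w.1 - 1)) ≤ _ ↔ _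
    rw [h.mul, h.inv _ h4, inv_mul_le_iff₀ h.nu4p_pos]
  refine ⟨θ, ?_, ?_⟩
  · intro t
    obtain ⟨x, hx⟩ := hs (Multiplicative.toAdd t)
    have hx1 : ν (1 + 4 * p * (x : K) - 1) ≤ ν (4 * p) := by
      rw [add_sub_cancel_left, h.mul]
      exact mul_le_of_le_one_right (h.nonneg _) x.2
    have hne : 1 + 4 * p * (x : K) ≠ 0 := by
      intro h0
      have := h.nu_one_unit _ hx1
      rw [h0, h.zero] at this; norm_num at this
    refine ⟨⟨Units.mk0 _ hne, hx1⟩, ?_⟩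
    change Multiplicative.ofAdd (ρ _) = t
    have : t = Multiplicative.ofAdd (Multiplicative.toAdd t) := rfl
    rw [this, ← hx]
    congr 2
    apply Subtype.ext
    change (4 * p : K)⁻¹ * (1 + 4 * p * (x : K) - 1) = x
    rw [add_sub_cancel_left, inv_mul_cancel_left₀ h4]
  · ext w
    rw [MonoidHom.mem_ker, hθ]
    constructor
    · intro hw
      have hc : ν ((w.1 - 1) / 4) ≤ ν (2 * p) := by
        have e : (w.1 - 1 : K) = (w.1 - 1) / 4 * (2 * 2) := by
          have := h.two_ne
          have h4 : (4 : K) = 2 * 2 := by norm_num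
          rw [h4]; field_simp
        rw [e, h.mul, h.nu4p, h.mul] at hw
        have := h.pos 2 h.two_ne
        rw [h.mul]
        have h22 : 0 < ν 2 * ν 2 := by positivity
        refine le_of_mul_le_mul_right (hw.trans (le_of_eq ?_)) h22
        ring
      obtain ⟨z, hz, hzn⟩ := h.hens ((w.1 - 1) / 4) (hc.trans_lt (by
        rw [h.mul]
        exact lt_of_le_of_lt (mul_le_of_le_one_left (h.nonneg _) h.nu2_le) h.nup_lt))
      have hs1 : ν (1 + 2 * z - 1) ≤ ν (4 * p) := by
        rw [add_sub_cancel_left, h.mul]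
        calc ν 2 * ν z ≤ ν 2 * ν (2 * p) := mul_le_mul_of_nonneg_left (hzn.trans hc) (h.nonneg _)
          _ = _ := by rw [← h.mul]; congr 1; ring
      have hne : 1 + 2 * z ≠ 0 := by
        intro h0
        have := h.nu_one_unit _ hs1
        rw [h0, h.zero] at this; norm_num at this
      refine ⟨⟨Units.mk0 _ hne, hs1⟩, ?_⟩
      apply Subtype.ext
      apply Units.ext
      change (1 + 2 * z) ^ 2 = (w.1 : K)
      have h4 : (4 : K) ≠ 0 := by
        have := h.two_ne
        have h4 : (4 : K) = 2 * 2 := by norm_num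
        rw [h4]; exact mul_ne_zero this this
      rw [eq_div_iff h4] at hz
      linear_combination hz
    · rintro ⟨s, rfl⟩
      change ν ((s.1 : K) ^ 2 - 1) ≤ _
      have e : (s.1 : K) ^ 2 - 1 = (s.1 - 1) * ((s.1 - 1) + 2) := by ring
      rw [e, h.mul]
      exact mul_le_mul s.2 ((h.add _ _).trans (max_le (le_trans s.2 h.nu4p_le) le_rfl)) (h.nonneg _) (h.nonneg _)

end LV
end OP

namespace OP
variable {p : ℕ} [Fact p.Prime] {K : Type*} [Field K] [Algebra ℚ_[p] K] {ν : K → ℝ}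
namespace LV

theorem nu_zpow (h : LV p K ν) (x : Kˣ) (k : ℤ) : ν ((x ^ k : Kˣ) : K) = ν x ^ k := by
  let f : Kˣ →* ℝˣ :=
    { toFun := fun x => Units.mk0 (ν x) (h.pos x x.ne_zero).ne'
      map_one' := by ext; simp [h.one]
      map_mul' := by intro x y; ext; simp [h.mul] }
  have := congrArg Units.val (map_zpow f x k)
  simpa [f] using this

def pu (h : LV p K ν) : Kˣ := Units.mk0 p h.p_ne

def W' (h : LV p K ν) : (Multiplicative ℤ × h.W) →* Kˣ :=
  MonoidHom.coprod (zpowersHom Kˣ h.pu) h.W.subtype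

theorem W'_apply (h : LV p K ν) (k : ℤ) (w : h.W) :
    h.W' (Multiplicative.ofAdd k, w) = h.pu ^ k * w := by
  simp [W', zpowersHom_apply]

theorem nu_W' (h : LV p K ν) (k : ℤ) (w : h.W) :
    ν (h.W' (Multiplicative.ofAdd k, w)) = ((p : ℝ)⁻¹) ^ k := by
  rw [W'_apply, Units.val_mul, h.mul, h.nu_zpow, h.nu_one_unit _ w.2, mul_one]
  congr 1
  exact h.nup

theorem zpow_inj (k : ℤ) (hk : ((p : ℝ)⁻¹) ^ k = 1) : k = 0 := by
  have hp : 1 < (p : ℝ) := by exact_mod_cast (Fact.out : p.Prime).one_lt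
  rw [_root_.inv_zpow, inv_eq_one] at hk
  exact (zpow_eq_one_iff_right₀ (by linarith) hp.ne').1 hk

theorem W'_inj (h : LV p K ν) : Function.Injective h.W' := by
  rw [injective_iff_map_eq_one]
  rintro ⟨k, w⟩ hkw
  obtain ⟨k, rfl⟩ := Multiplicative.ofAdd.surjective k
  have h1 := h.nu_W' k w
  rw [hkw, Units.val_one, h.one] at h1
  have hk := zpow_inj k h1.symm
  subst hk
  rw [h.W'_apply] at hkw
  simp at hkw
  rw [hkw]; rfl

theorem W'_two (h : LV p K ν) : ∀ w ∈ h.W'.range, w ^ 2 = 1 → w = 1 := by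
  rintro _ ⟨⟨k, w⟩, rfl⟩ hkw
  obtain ⟨k, rfl⟩ := Multiplicative.ofAdd.surjective k
  rw [← map_pow] at hkw
  have := h.W'_inj (hkw.trans (map_one _).symm)
  rw [Prod.pow_mk, Prod.mk_eq_one, ← ofAdd_nsmul, ofAdd_eq_one] at this
  have hk : k = 0 := by simpa using this.1
  subst hk
  rw [h.W'_apply]
  have hw := congrArg (fun x : h.W => ((x : Kˣ) : K)) this.2
  simp at hw
  rcases hw with hw | hw
  · ext; simpa using hw
  · exfalso
    have h2 : ν ((w : Kˣ) - 1 : K) ≤ ν (4 * p) := w.2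
    rw [hw, Units.val_neg, Units.val_one] at h2
    have e : (-1 - 1 : K) = - 2 := by norm_num
    rw [e, h.neg, h.nu4p] at h2
    have h3 := h.pos 2 h.two_ne
    have h4 : ν 2 * (ν 2 * ν p) < ν 2 * 1 := by
      refine mul_lt_mul_of_pos_left ?_ h3
      exact lt_of_le_of_lt (mul_le_of_le_one_left (h.nonneg _) h.nu2_le) h.nup_lt
    rw [mul_one, ← mul_assoc] at h4
    linarith

theorem W'_idx (h : LV p K ν) : h.W'.range.index ≠ 0 := by
  have hp : 1 < (p : ℝ) := by exact_mod_cast (Fact.out : p.Prime).one_lt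
  have hm : (4 * p * p : ℤ_[p]) ≠ 0 := by
    have : (p : ℤ_[p]) ≠ 0 := by exact_mod_cast (Fact.out : p.Prime).ne_zero
    have h4 : (4 : ℤ_[p]) ≠ 0 := by norm_num
    exact mul_ne_zero (mul_ne_zero h4 this) this
  have hfin := finite_quot p _ hm
  obtain ⟨ρ, -, hk⟩ := h.exists_rho _ hm
  have hnu : ‖(4 * p * p : ℤ_[p])‖ = ν (4 * p) * (p : ℝ)⁻¹ := by
    rw [norm_mul, PadicInt.norm_p]
    congr 1
    have := h.ext ((4 * p : ℤ_[p]) : ℚ_[p])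
    have e : algebraMap ℚ_[p] K ((4 * p : ℤ_[p]) : ℚ_[p]) = 4 * p := by
      rw [PadicInt.coe_mul, map_mul, show ((4 : ℤ_[p]) : ℚ_[p]) = 4 from rfl, map_ofNat]; simp
    rw [e] at this
    exact this.symm
  have hex : ∀ x : Kˣ, ∃ k : ℤ, (p : ℝ)⁻¹ < ν ((h.pu ^ k * x : Kˣ) : K) ∧ ν ((h.pu ^ k * x : Kˣ) : K) ≤ 1 := by
    intro x
    obtain ⟨n, h1, h2⟩ := exists_mem_Ioc_zpow (h.pos x x.ne_zero) hp
    refine ⟨n + 1, ?_⟩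
    have hpp : ν (h.pu : K) = (p : ℝ)⁻¹ := h.nup
    rw [Units.val_mul, h.mul, h.nu_zpow, hpp, _root_.inv_zpow]
    have hpos : 0 < (p : ℝ) ^ n := zpow_pos (by linarith) n
    rw [zpow_add₀ (by linarith), zpow_one] at h2 ⊢
    constructor
    · rw [mul_inv, mul_right_comm]
      rw [lt_mul_iff_one_lt_left (by positivity), ← div_eq_inv_mul]
      exact (one_lt_div hpos).2 h1
    · rw [← div_eq_inv_mul]
      exact div_le_one_of_le₀ h2 (by positivity)
  choose k hk1 hk2 using hex
  let g : Kˣ → (Fin (Module.finrank ℚ_[p] K) → ℤ_[p] ⧸ Ideal.span {(4 * p * p : ℤ_[p])}) :=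
    fun x => ρ ⟨_, hk2 x⟩
  have hg : ∀ x y, g x = g y → x⁻¹ * y ∈ h.W'.range := by
    intro x y hxy
    have h1 : ρ (⟨_, hk2 y⟩ - ⟨_, hk2 x⟩) = 0 := by
      rw [map_sub, sub_eq_zero]; exact hxy.symm
    rw [hk, hnu] at h1
    set X := h.pu ^ k x * x with hX
    set Y := h.pu ^ k y * y with hY
    change ν ((Y : K) - X) ≤ _ at h1
    have hw : X⁻¹ * Y ∈ h.W := by
      change ν (((X⁻¹ * Y : Kˣ) : K) - 1) ≤ _
      have e : ((X⁻¹ * Y : Kˣ) : K) - 1 = (X : K)⁻¹ * (Y - X) := by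
        have := X.ne_zero
        push_cast; field_simp
      rw [e, h.mul, h.inv _ X.ne_zero, inv_mul_le_iff₀ (h.pos _ X.ne_zero), mul_comm]
      exact h1.trans (mul_le_mul_of_nonneg_left (hk1 x).le (h.nonneg _))
    refine ⟨(Multiplicative.ofAdd (k x - k y), ⟨_, hw⟩), ?_⟩
    rw [h.W'_apply, _root_.zpow_sub]
    change h.pu ^ k x * (h.pu ^ k y)⁻¹ * ((h.pu ^ k x * x)⁻¹ * (h.pu ^ k y * y)) = x⁻¹ * y
    generalize h.pu ^ k x = a
    generalize h.pu ^ k y = b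
    rw [mul_inv]
    calc a * b⁻¹ * (a⁻¹ * x⁻¹ * (b * y)) = (a * a⁻¹) * (b⁻¹ * b) * (x⁻¹ * y) := by
          simp only [mul_comm, mul_left_comm, mul_assoc]
      _ = _ := by simp
  have : Finite (Kˣ ⧸ h.W'.range) := by
    refine Finite.of_injective (fun q => g (Quotient.out q)) ?_
    intro a b hab
    have := hg _ _ hab
    rw [← QuotientGroup.eq] at this
    simpa using this
  exact Subgroup.index_ne_zero_of_finite

theorem sq_index (h : LV p K ν) :
    (powMonoidHom 2 : Kˣ →* Kˣ).range.index =
      4 * Nat.card (ℤ_[p] ⧸ Ideal.span {(2 : ℤ_[p])}) ^ Module.finrank ℚ_[p] K := by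
  rw [grp_idx _ h.W'_idx h.W'_two]
  have hker : Nat.card (powMonoidHom 2 : Kˣ →* Kˣ).ker = 2 := by
    have : ((powMonoidHom 2 : Kˣ →* Kˣ).ker : Set Kˣ) = {1, -1} := by
      ext x
      change x ^ 2 = 1 ↔ x = 1 ∨ x = -1
      rw [Units.ext_iff, Units.ext_iff, Units.ext_iff, Units.val_pow_eq_pow_val, Units.val_one,
        Units.val_neg, Units.val_one, sq_eq_one_iff]
    have h2 : Nat.card ((powMonoidHom 2 : Kˣ →* Kˣ).ker : Set Kˣ) = 2 := by
      rw [this, Nat.card_coe_set_eq, Set.ncard_pair]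
      intro h0
      have := congrArg Units.val h0
      simp only [Units.val_one, Units.val_neg] at this
      have h2 := h.two_ne
      apply h2
      linear_combination this
    exact h2
  have hmap : h.W'.range.map (powMonoidHom 2 : Kˣ →* Kˣ) =
      ((powMonoidHom 2 : (Multiplicative ℤ × h.W) →* _).range).map h.W' := by
    rw [MonoidHom.map_range, MonoidHom.map_range]
    congr 1
    ext x : 1
    simp
  rw [hmap, MonoidHom.range_eq_map h.W', Subgroup.relIndex_map_map_of_injective _ _ h.W'_inj,
    Subgroup.relIndex_top_right, hker]
  obtain ⟨θ, hθ, hθk⟩ := h.exists_theta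
  have hprod : (powMonoidHom 2 : (Multiplicative ℤ × h.W) →* _).range =
      (powMonoidHom 2 : Multiplicative ℤ →* _).range.prod (powMonoidHom 2 : h.W →* h.W).range := by
    ext ⟨a, b⟩
    simp [Subgroup.mem_prod, Prod.ext_iff]
  have hZ : (powMonoidHom 2 : Multiplicative ℤ →* _).range.index = 2 := by
    rw [Subgroup.index_eq_two_iff]
    refine ⟨Multiplicative.ofAdd 1, fun b => ?_⟩
    obtain ⟨b, rfl⟩ := Multiplicative.ofAdd.surjective b
    have key : ∀ c : ℤ, Multiplicative.ofAdd c ∈ (powMonoidHom 2 : Multiplicative ℤ →* _).range ↔ Even c := by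
      intro c
      constructor
      · rintro ⟨x, hx⟩
        obtain ⟨x, rfl⟩ := Multiplicative.ofAdd.surjective x
        rw [powMonoidHom_apply, ← ofAdd_nsmul] at hx
        have := Multiplicative.ofAdd.injective hx
        exact ⟨x, by rw [← this]; simp; ring⟩
      · rintro ⟨x, rfl⟩
        exact ⟨Multiplicative.ofAdd x, by rw [powMonoidHom_apply, ← ofAdd_nsmul]; congr 1; simp; ring⟩
    rw [← ofAdd_add, key, key, Int.even_add_one, Xor]
    tauto
  rw [hprod, Subgroup.index_prod, hZ, ← hθk, Subgroup.index_ker, MonoidHom.range_eq_top.2 hθ]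
  rw [Subgroup.card_top]
  have : Nat.card (Multiplicative (Fin (Module.finrank ℚ_[p] K) → ℤ_[p] ⧸ Ideal.span {(2 : ℤ_[p])})) =
    Nat.card (ℤ_[p] ⧸ Ideal.span {(2 : ℤ_[p])}) ^ Module.finrank ℚ_[p] K := by
    rw [Nat.card_congr Multiplicative.toAdd, Nat.card_fun]; simp
  rw [this]; ring
end LV
end OP

namespace OP
open QuadraticAlgebra

/-- `t` is a nonzero value of `x² - a y²`. -/
def Nm {F : Type*} [Field F] (a t : F) : Prop := t ≠ 0 ∧ ∃ x y : F, t = x * x - a * (y * y)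

theorem norm_index {F : Type*} [Field F] (h2 : (2 : F) ≠ 0) (a : F) (ha0 : a ≠ 0)
    [Hab : Fact (∀ r, r ^ 2 ≠ a + 0 * r)] :
    let S : Subgroup Fˣ := (powMonoidHom 2 : Fˣ →* Fˣ).range
    let S' : Subgroup (QuadraticAlgebra F a 0)ˣ := (powMonoidHom 2 : (QuadraticAlgebra F a 0)ˣ →* _).range
    ∃ T M : ℕ, S.index = 2 * T ∧ S'.index = T * M ∧
      S.index = M * (Units.map (QuadraticAlgebra.norm (R := F) (a := a) (b := 0))).range.index := by
  intro S S'
  set N := (Units.map (QuadraticAlgebra.norm (R := F) (a := a) (b := 0)))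
  set i : Fˣ →* (QuadraticAlgebra F a 0)ˣ := Units.map (algebraMap F (QuadraticAlgebra F a 0)).toMonoidHom
  have hNi : ∀ x, N (i x) = x ^ 2 := by
    intro x; ext; simp [N, i]
  have hS : S ≤ N.range := by
    rintro _ ⟨x, rfl⟩
    exact ⟨i x, hNi x⟩
  have hST : S ≤ S'.comap i := by
    rintro _ ⟨x, rfl⟩
    exact ⟨i x, by simp⟩
  -- step 1
  have k1 : S.relIndex (S'.comap i) = 2 := by
    rw [Subgroup.relIndex_eq_two_iff]
    have hS1 : ∀ x : Fˣ, x ∈ S ↔ ∃ y : F, (x : F) = y * y := by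
      intro x
      constructor
      · rintro ⟨y, rfl⟩
        exact ⟨y, by simp [sq]⟩
      · rintro ⟨y, hy⟩
        have : y ≠ 0 := by rintro rfl; exact x.ne_zero (by simpa using hy)
        exact ⟨Units.mk0 y this, by ext; simp [hy, sq]⟩
    have hns : ¬ ∃ y, a = y * y := by
      rintro ⟨y, hy⟩
      exact Hab.out y (by rw [hy]; ring)
    refine ⟨Units.mk0 a ha0, ?_, ?_⟩
    · have h0 : (⟨0, 1⟩ : QuadraticAlgebra F a 0) ≠ 0 := by
        intro h; have := congrArg QuadraticAlgebra.im h; simp at this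
      refine ⟨Units.mk0 ⟨0, 1⟩ h0, ?_⟩
      ext <;> simp [i, sq]
    · rintro b ⟨z, hz⟩
      rw [hS1, hS1]
      have hz' := congrArg Units.val hz
      have hre := congrArg QuadraticAlgebra.re hz'
      have him := congrArg QuadraticAlgebra.im hz'
      simp [i, sq] at hre him
      have h3 : (z : QuadraticAlgebra F a 0).re * (z : QuadraticAlgebra F a 0).im = 0 := by
        have : 2 * ((z : QuadraticAlgebra F a 0).re * (z : QuadraticAlgebra F a 0).im) = 0 := by
          linear_combination him
        exact (mul_eq_zero.1 this).resolve_left h2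
      have hnot : ∀ u v : F, (b : F) = u * u → (b : F) * a = v * v → False := by
        intro u v hu hv
        have hu0 : u ≠ 0 := by rintro rfl; exact b.ne_zero (by simpa using hu)
        apply hns
        refine ⟨v / u, ?_⟩
        field_simp
        rw [sq, sq, ← hv, hu]; ring
      rcases mul_eq_zero.1 h3 with h | h
      · rw [h] at hre
        left
        have h4 : (b : F) * a = (a * (z : QuadraticAlgebra F a 0).im) * (a * (z : QuadraticAlgebra F a 0).im) := by
          rw [← hre]; ring
        exact ⟨⟨_, by simpa using h4⟩, fun ⟨u, hu⟩ => hnot u _ hu h4⟩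
      · rw [h] at hre
        right
        have h4 : (b : F) = (z : QuadraticAlgebra F a 0).re * (z : QuadraticAlgebra F a 0).re := by
          rw [← hre]; ring
        exact ⟨⟨_, h4⟩, fun ⟨v, hv⟩ => hnot _ v h4 (by simpa using hv)⟩
  -- step 2
  have k2 : S.comap N = i.range ⊔ S' := by
    apply le_antisymm
    · rintro z ⟨c, hc⟩
      have hc' : (QuadraticAlgebra.norm (z : QuadraticAlgebra F a 0)) = (c : F) * c := by
        have := congrArg Units.val hc
        simp [N, sq] at this
        exact this.symm
      -- w = z / c has norm 1
      obtain ⟨y, e, hy⟩ : ∃ (y : (QuadraticAlgebra F a 0)ˣ) (e : Fˣ), z = i e * y ^ 2 := by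
        set w : QuadraticAlgebra F a 0 := z.val with hw
        by_cases h0 : w.re + c = 0
        · -- z = -c + im ω with norm c^2 → im = 0
          have h1 := hc'
          rw [QuadraticAlgebra.norm_def] at h1
          have h3 : w.re = -c := by linear_combination h0
          rw [h3] at h1
          have h5 : a * (w.im * w.im) = 0 := by linear_combination -h1
          have h4 : w.im = 0 := by
            rcases mul_eq_zero.1 h5 with h | h
            · exact absurd h ha0
            · exact mul_self_eq_zero.1 h
          refine ⟨1, -c, ?_⟩
          ext
          · simp [i, ← hw, h3]
          · simp [i, ← hw, h4]
        · -- y = w + c ; y^2 = w^2 + 2 c w + N w = w * (trace w + 2c) = 2 w (re + c)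
          have hy0 : w + algebraMap F _ (c : F) ≠ 0 := by
            intro h; apply h0
            have := congrArg QuadraticAlgebra.re h; simpa using this
          have h22 : 2 * (w.re + c) ≠ 0 := mul_ne_zero h2 h0
          refine ⟨Units.mk0 _ hy0, (Units.mk0 _ h22)⁻¹, ?_⟩
          rw [map_inv, eq_inv_mul_iff_mul_eq]
          rw [QuadraticAlgebra.norm_def] at hc'
          ext
          · simp [i, ← hw, sq]
            linear_combination hc'
          · simp [i, ← hw, sq]
            ring
      rw [hy]
      exact Subgroup.mul_mem_sup ⟨e, rfl⟩ ⟨y, rfl⟩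
    · rw [sup_le_iff]
      constructor
      · rintro _ ⟨x, rfl⟩
        exact ⟨x, (hNi x).symm⟩
      · rintro _ ⟨x, rfl⟩
        exact ⟨N x, by simp⟩
  refine ⟨(S'.comap i).index, (S.comap N).index, ?_, ?_, ?_⟩
  · rw [← Subgroup.relIndex_mul_index hST, k1]
  · rw [k2, Subgroup.index_comap, ← Subgroup.relIndex_sup_right, Subgroup.relIndex_mul_index le_sup_right]
  · rw [Subgroup.index_comap, Subgroup.relIndex_mul_index hS]

end OP

namespace OP

/-- the arithmetic hypotheses on the base field. -/
structure Arith (F : Type*) [Field F] : Prop where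
  two : (2 : F) ≠ 0
  ex : ∀ a : F, a ≠ 0 → (¬ ∃ r, a = r * r) → ∃ c, c ≠ 0 ∧ ¬ Nm a c
  mul : ∀ a : F, a ≠ 0 → (¬ ∃ r, a = r * r) → ∀ x y, x ≠ 0 → y ≠ 0 → ¬ Nm a x → ¬ Nm a y → Nm a (x * y)
  H2 : ∀ u v : F, u ≠ 0 → v ≠ 0 → ∃ c, c ≠ 0 ∧ (¬ ∃ r, u * c = r * r) ∧ ¬ ∃ r, v * c = r * r

theorem exists_Arith (p : ℕ) [Fact p.Prime] (F : Type*) [Field F] [Algebra ℚ_[p] F]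
    [FiniteDimensional ℚ_[p] F] : Arith F := by
  obtain ⟨ν, hν⟩ := exists_LV p F
  have h2 := hν.two_ne
  have hF := hν.sq_index
  have hS1 : ∀ x : Fˣ, x ∈ (powMonoidHom 2 : Fˣ →* Fˣ).range ↔ ∃ y : F, (x : F) = y * y := by
    intro x
    constructor
    · rintro ⟨y, rfl⟩
      exact ⟨y, by simp [sq]⟩
    · rintro ⟨y, hy⟩
      have : y ≠ 0 := by rintro rfl; exact x.ne_zero (by simp at hy)
      exact ⟨Units.mk0 y this, by ext; simp [hy, sq]⟩
  have hc : 0 < Nat.card (ℤ_[p] ⧸ Ideal.span {(2:ℤ_[p])}) := by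
    have := finite_quot p 2 (by norm_num)
    exact Nat.card_pos
  set q := Nat.card (ℤ_[p] ⧸ Ideal.span {(2:ℤ_[p])}) 
  have key : ∀ a : F, a ≠ 0 → (¬ ∃ r, a = r * r) →
      ∃ N : Subgroup Fˣ, N.index = 2 ∧ ∀ x : Fˣ, x ∈ N ↔ Nm a (x : F) := by
    intro a ha hns
    have Hab : Fact (∀ r, r ^ 2 ≠ a + 0 * r) := ⟨fun r hr => hns ⟨r, by linear_combination -hr⟩⟩
    refine ⟨(Units.map (QuadraticAlgebra.norm (R := F) (a := a) (b := 0))).range, ?_, ?_⟩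
    · obtain ⟨T, M, e1, e2, e3⟩ := norm_index h2 a ha
      have : FiniteDimensional ℚ_[p] (QuadraticAlgebra F a 0) := by
        have : Module.Finite F (QuadraticAlgebra F a 0) := inferInstance
        exact Module.Finite.trans F _
      obtain ⟨ν', hν'⟩ := exists_LV p (QuadraticAlgebra F a 0)
      have hL := hν'.sq_index
      have hdim : Module.finrank ℚ_[p] (QuadraticAlgebra F a 0) = Module.finrank ℚ_[p] F * 2 := by
        rw [← Module.finrank_mul_finrank ℚ_[p] F, QuadraticAlgebra.finrank_eq_two]
      rw [hdim, pow_mul] at hL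
      set R := (Units.map (QuadraticAlgebra.norm (R := F) (a := a) (b := 0))).range.index
      rw [hF] at e1 e3
      rw [hL] at e2
      have hQ : 0 < q ^ Module.finrank ℚ_[p] F := pow_pos hc _
      set Q := q ^ Module.finrank ℚ_[p] F
      have hT : T = 2 * Q := by omega
      subst hT
      have hM : M = 2 * Q := by
        have : (2 * Q) * (2 * Q) = (2 * Q) * M := by rw [← e2]; ring
        exact (Nat.eq_of_mul_eq_mul_left (by omega) this).symm
      subst hM
      have : (2 * Q) * 2 = (2 * Q) * R := by rw [← e3]; ring
      exact (Nat.eq_of_mul_eq_mul_left (by omega) this).symm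
    · intro x
      constructor
      · rintro ⟨z, rfl⟩
        refine ⟨Units.ne_zero _, (z : QuadraticAlgebra F a 0).re, (z : QuadraticAlgebra F a 0).im, ?_⟩
        simp [QuadraticAlgebra.norm_def]; ring
      · rintro ⟨h0, u, v, huv⟩
        have hz : (⟨u, v⟩ : QuadraticAlgebra F a 0) ≠ 0 := by
          intro h
          have e1 := congrArg QuadraticAlgebra.re h
          have e2 := congrArg QuadraticAlgebra.im h
          simp at e1 e2
          rw [e1, e2] at huv; simp at huv
        refine ⟨Units.mk0 _ hz, ?_⟩
        ext
        simp [QuadraticAlgebra.norm_def, huv]; ring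
  refine ⟨h2, ?_, ?_, ?_⟩
  · intro a ha hns
    obtain ⟨N, hN, hm⟩ := key a ha hns
    have : N ≠ ⊤ := by rintro rfl; simp at hN
    obtain ⟨c, hc⟩ := SetLike.exists_not_mem_of_ne_top N this rfl
    exact ⟨c, c.ne_zero, by rwa [hm] at hc⟩
  · intro a ha hns x y hx hy nx ny
    obtain ⟨N, hN, hm⟩ := key a ha hns
    have := Subgroup.mul_mem_iff_of_index_two hN (a := Units.mk0 x hx) (b := Units.mk0 y hy)
    rw [hm, hm, hm] at this
    simpa [nx, ny] using this
  · intro u v hu hv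
    by_contra hcon
    push Not at hcon
    set S := (powMonoidHom 2 : Fˣ →* Fˣ).range
    have hQ : 0 < q ^ Module.finrank ℚ_[p] F := pow_pos hc _
    have h4 : 4 ≤ Nat.card (Fˣ ⧸ S) := by
      change 4 ≤ S.index
      rw [hF]; omega
    have : Finite (Fˣ ⧸ S) := Nat.finite_of_card_ne_zero (by omega)
    let a : Fˣ := Units.mk0 u hu
    let b : Fˣ := Units.mk0 v hv
    have hall : ∀ t : Fˣ ⧸ S, t = ((a⁻¹ : Fˣ) : Fˣ ⧸ S) ∨ t = ((b⁻¹ : Fˣ) : Fˣ ⧸ S) := by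
      intro t
      induction t using QuotientGroup.induction_on with
      | H c =>
      by_cases h : ∃ r, u * c = r * r
      · left
        symm
        rw [QuotientGroup.eq, inv_inv, hS1]
        simpa [a] using h
      · right
        symm
        rw [QuotientGroup.eq, inv_inv, hS1]
        have := hcon c c.ne_zero (by simpa using h)
        simpa [b] using this
    have : Nat.card (Fˣ ⧸ S) ≤ Nat.card Bool := by
      apply Nat.card_le_card_of_injective (fun t : Fˣ ⧸ S => @decide (t = ((a⁻¹ : Fˣ) : Fˣ ⧸ S)) (Classical.dec _))
      intro t s hts
      have := decide_eq_decide.1 hts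
      rcases hall t with h | h <;> rcases hall s with h' | h'
      · rw [h, h']
      · rw [h, this.1 h]
      · rw [h', this.2 h']
      · rw [h, h']
    simp at this
    omega
end OP

namespace OP
section nm
variable {F : Type*} [Field F]

/-- not a square -/
def NS (a : F) : Prop := ¬ ∃ r, a = r * r

theorem nm_sq (a t : F) (ht : t ≠ 0) : Nm a (t * t) := ⟨mul_ne_zero ht ht, t, 0, by ring⟩

theorem nm_one (a : F) : Nm a 1 := by simpa using nm_sq a 1 one_ne_zero

theorem nm_mul {a s t : F} (hs : Nm a s) (ht : Nm a t) : Nm a (s * t) := by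
  obtain ⟨h1, x, y, rfl⟩ := hs
  obtain ⟨h2, u, v, rfl⟩ := ht
  exact ⟨mul_ne_zero h1 h2, x * u + a * y * v, x * v + y * u, by ring⟩

theorem nm_cancel {a s t : F} (hs : Nm a s) (ht : Nm a (s * t)) : Nm a t := by
  have h := nm_mul (nm_mul hs ht) (nm_sq a s⁻¹ (inv_ne_zero hs.1))
  have h0 := hs.1
  convert h using 1
  field_simp

theorem nm_cancel' {a s t : F} (hs : Nm a s) (ht : Nm a (t * s)) : Nm a t :=
  nm_cancel hs (by rwa [mul_comm])

theorem nm_of_sq (h2 : (2 : F) ≠ 0) {a t : F} (ha : a ≠ 0) (h : ¬ NS a) (ht : t ≠ 0) : Nm a t := by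
  unfold NS at h
  push Not at h
  obtain ⟨r, rfl⟩ := h
  have hr : r ≠ 0 := left_ne_zero_of_mul ha
  refine ⟨ht, (1 + t) / 2, (1 - t) / (2 * r), ?_⟩
  field_simp; ring

theorem nm_comm (h2 : (2 : F) ≠ 0) {a c : F} (ha : a ≠ 0) (h : Nm a c) : Nm c a := by
  obtain ⟨hc, x, y, hxy⟩ := h
  by_cases hy : y = 0
  · subst hy
    exact nm_of_sq h2 hc (by rw [NS]; push Not; exact ⟨x, by rw [hxy]; ring⟩) ha
  · refine ⟨ha, x / y, 1 / y, ?_⟩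
    field_simp
    rw [hxy]; ring

end nm
namespace Arith
variable {F : Type*} [Field F] (H : Arith F)
include H

theorem nmul {a : F} (ha : a ≠ 0) {x y : F} (hx : x ≠ 0) (hy : y ≠ 0) (nx : ¬ Nm a x) (ny : ¬ Nm a y) :
    Nm a (x * y) := by
  by_cases h : NS a
  · exact H.mul a ha h x y hx hy nx ny
  · exact absurd (nm_of_sq H.two ha h hx) nx

theorem nm_ab {a b c : F} (ha : a ≠ 0) (hb : b ≠ 0) (h : Nm a c) (h' : Nm b c) : Nm (a * b) c :=
  nm_comm H.two h.1 (nm_mul (nm_comm H.two ha h) (nm_comm H.two hb h'))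

theorem nm_ab' {a b c : F} (ha : a ≠ 0) (hb : b ≠ 0) (hc : c ≠ 0) (h : ¬ Nm a c) (h' : ¬ Nm b c) :
    Nm (a * b) c := by
  apply nm_comm H.two hc
  exact H.nmul hc ha hb (fun k => h (nm_comm H.two hc k)) (fun k => h' (nm_comm H.two hc k))

theorem fac {α β z : F} (hα : α ≠ 0) (hβ : β ≠ 0) (hz : z ≠ 0) (hn : NS (α * β)) :
    ∃ s, Nm α s ∧ Nm β (s * z) := by
  by_cases h1 : Nm β z
  · exact ⟨1, nm_one _, by simpa using h1⟩
  obtain ⟨c, hc, hcn⟩ := H.ex _ (mul_ne_zero hα hβ) hn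
  by_cases h2 : Nm α c
  · have h3 : ¬ Nm β c := fun h => hcn (H.nm_ab hα hβ h2 h)
    exact ⟨c, h2, H.nmul hβ hc hz h3 h1⟩
  · have h3 : Nm β c := by
      by_contra h
      exact hcn (H.nm_ab' hα hβ hc h2 h)
    by_cases h4 : Nm α z
    · exact ⟨z, h4, nm_sq _ _ hz⟩
    · refine ⟨c * z, H.nmul hα hc hz h2 h4, ?_⟩
      rw [mul_assoc]
      exact nm_mul h3 (nm_sq _ _ hz)

theorem nonsq {a u : F} (ha : a ≠ 0) (hu : u ≠ 0) : ∃ t, Nm a t ∧ NS (u * t) := by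
  by_cases hun : NS u
  · exact ⟨1, nm_one _, by simpa using hun⟩
  have key : ∃ t, Nm a t ∧ NS t := by
    by_cases h : NS a
    · obtain ⟨d, hd, hdn⟩ := H.ex a ha h
      obtain ⟨c, hc, h1, h2⟩ := H.H2 1 d one_ne_zero hd
      rw [one_mul] at h1
      by_cases h3 : Nm a c
      · exact ⟨c, h3, h1⟩
      · exact ⟨d * c, H.nmul ha hd hc hdn h3, h2⟩
    · obtain ⟨c, hc, h1, h2⟩ := H.H2 1 1 one_ne_zero one_ne_zero
      rw [one_mul] at h1
      exact ⟨c, nm_of_sq H.two ha h hc, h1⟩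
  obtain ⟨t, h1, h2⟩ := key
  refine ⟨t, h1, ?_⟩
  rintro ⟨r, hr⟩
  unfold NS at hun
  push Not at hun
  obtain ⟨s, rfl⟩ := hun
  have hs : s ≠ 0 := left_ne_zero_of_mul hu
  apply h2
  refine ⟨r / s, ?_⟩
  field_simp
  linear_combination hr

theorem tern {a b c e : F} (ha : a ≠ 0) (hb : b ≠ 0) (hc : c ≠ 0) (he : e ≠ 0)
    (hn : NS (-(a * b * c) * e)) : ∃ x y z, a * (x * x) + b * (y * y) + c * (z * z) = e := by
  have h2 := H.two
  obtain ⟨s, ⟨hs, p, q, hpq⟩, ⟨hse, u, v, huv⟩⟩ := H.fac (α := -(a * b)) (β := e * c) (z := e / a)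
    (neg_ne_zero.2 (mul_ne_zero ha hb)) (mul_ne_zero he hc) (div_ne_zero he ha) (by
      convert hn using 1; ring)
  -- t = s / a
  have h1 : a * s * e = a * a * (u * u - e * c * (v * v)) := by
    rw [← huv]; field_simp
  have h3 : a * (p / a * (p / a)) + b * (q * q) + c * (v * v) = u * u / e := by
    field_simp
    have : a * e * s = a * (a * (u * u - e * c * (v * v))) := by linear_combination h1
    rw [hpq] at this
    have h4 := mul_left_cancel₀ ha (show a * (e * (p * p - -(a * b) * (q * q))) = a * (a * (u * u - e * c * (v * v))) by linear_combination this)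
    linear_combination h4
  by_cases hu : u = 0
  · subst hu
    have hv : v ≠ 0 := by
      rintro rfl; apply hse; rw [huv]; ring
    set x := p / a / v
    set y := q / v
    have h5 : a * (x * x) + b * (y * y) + c = 0 := by
      have : a * (x * x) + b * (y * y) + c = (a * (p / a * (p / a)) + b * (q * q) + c * (v * v)) / (v * v) := by
        simp only [x, y]; field_simp
      rw [this, h3]; simp
    refine ⟨(e - c) / (2 * c) * x, (e - c) / (2 * c) * y, (e - c) / (2 * c) + 1, ?_⟩
    have : a * ((e - c) / (2 * c) * x * ((e - c) / (2 * c) * x)) + b * ((e - c) / (2 * c) * y * ((e - c) / (2 * c) * y)) 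
      = ((e - c) / (2 * c)) ^ 2 * (- c) := by
      linear_combination ((e - c) / (2 * c)) ^ 2 * h5
    rw [this]
    field_simp; ring
  · refine ⟨p / a * (e / u), q * (e / u), v * (e / u), ?_⟩
    have : a * (p / a * (e / u) * (p / a * (e / u))) + b * (q * (e / u) * (q * (e / u))) +
      c * (v * (e / u) * (v * (e / u))) = (a * (p / a * (p / a)) + b * (q * q) + c * (v * v)) * (e / u) ^ 2 := by ring
    rw [this, h3]; field_simp

theorem quat {a b c d e : F} (ha : a ≠ 0) (hb : b ≠ 0) (hc : c ≠ 0) (hd : d ≠ 0) (he : e ≠ 0) :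
    ∃ x y z w, a * (x * x) + b * (y * y) + c * (z * z) + d * (w * w) = e := by
  obtain ⟨t, ⟨ht, u, v, huv⟩, hn⟩ := H.nonsq (a := -(c * d)) (u := -(a * b * c) * e)
    (neg_ne_zero.2 (mul_ne_zero hc hd))
    (mul_ne_zero (neg_ne_zero.2 (mul_ne_zero (mul_ne_zero ha hb) hc)) he)
  obtain ⟨x, y, z, h⟩ := H.tern ha hb (c := c * t) (mul_ne_zero hc ht) he (by convert hn using 1; ring)
  refine ⟨x, y, u * z, c * v * z, ?_⟩
  rw [← h, huv]; ring

/-- symbols of elements of `F` become trivial over `E`. -/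
theorem hilb {E : Type*} [Field E] (f : F →+* E) (θ : F) (hθ0 : θ ≠ 0) (hθ : NS θ) (i : E) (hi : i * i = f θ)
    {x y : F} (hx : x ≠ 0) (hy : y ≠ 0) : Nm (f x) (f y) := by
  obtain ⟨u, v, w, h⟩ := H.tern hx hy (c := -(x * y)) (neg_ne_zero.2 (mul_ne_zero hx hy)) hθ0 (by
    rintro ⟨r, hr⟩
    apply hθ
    refine ⟨r / (x * y), ?_⟩
    field_simp
    linear_combination hr)
  have hfx : f x ≠ 0 := by simpa using hx
  have hfy : f y ≠ 0 := by simpa using hy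
  have hfθ : f θ ≠ 0 := by simpa using hθ0
  have h2 : (2 : E) ≠ 0 := by
    have h := (map_ne_zero f).2 H.two
    rwa [map_ofNat] at h
  have h' := congrArg f h
  simp only [map_add, map_mul, map_neg] at h'
  by_cases h0 : i * i - f x * (f u * f u) = 0
  · refine nm_of_sq h2 hfx ?_ hfy
    rw [NS]; push Not
    have hu : f u ≠ 0 := by
      intro h1; rw [h1, hi] at h0; simp at h0; exact hθ0 h0
    refine ⟨i / f u, ?_⟩
    field_simp
    linear_combination -h0
  · have h3 : (f v * f v - f x * (f w * f w)) * f y = i * i - f x * (f u * f u) := by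
      rw [hi]; linear_combination h'
    have h4 : Nm (f x) ((f v * f v - f x * (f w * f w)) * f y) := by
      rw [h3]; exact ⟨h0, _, _, rfl⟩
    exact nm_cancel ⟨left_ne_zero_of_mul h4.1, _, _, rfl⟩ h4
end Arith
end OP

namespace OP
open Matrix
section cong
variable {F : Type*} [Field F]
variable {ι κ τ : Type*} [Fintype ι] [DecidableEq ι] [Fintype κ] [DecidableEq κ] [Fintype τ] [DecidableEq τ]

/-- congruence of matrices, possibly indexed by different types -/
def Cong (A : Matrix ι ι F) (B : Matrix κ κ F) : Prop :=
  ∃ (k : Matrix ι κ F) (k' : Matrix κ ι F), k * k' = 1 ∧ k' * k = 1 ∧ kᵀ * A * k = B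

theorem Cong.refl (A : Matrix ι ι F) : Cong A A := ⟨1, 1, by simp, by simp, by simp⟩

theorem Cong.trans {A : Matrix ι ι F} {B : Matrix κ κ F} {C : Matrix τ τ F} (h : Cong A B) (h' : Cong B C) :
    Cong A C := by
  obtain ⟨k, k', h1, h2, rfl⟩ := h
  obtain ⟨l, l', h3, h4, rfl⟩ := h'
  refine ⟨k * l, l' * k', ?_, ?_, ?_⟩
  · rw [Matrix.mul_assoc, ← Matrix.mul_assoc l, h3, Matrix.one_mul, h1]
  · rw [Matrix.mul_assoc, ← Matrix.mul_assoc k', h2, Matrix.one_mul, h4]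
  · rw [transpose_mul]; simp only [Matrix.mul_assoc]

theorem Cong.symm {A : Matrix ι ι F} {B : Matrix κ κ F} (h : Cong A B) : Cong B A := by
  obtain ⟨k, k', h1, h2, rfl⟩ := h
  refine ⟨k', k, h2, h1, ?_⟩
  have : k'ᵀ * kᵀ = 1 := by rw [← transpose_mul, h1, transpose_one]
  calc k'ᵀ * (kᵀ * A * k) * k' = (k'ᵀ * kᵀ) * A * (k * k') := by simp only [Matrix.mul_assoc]
    _ = A := by rw [this, h1, Matrix.one_mul, Matrix.mul_one]

theorem Cong.map {E : Type*} [Field E] (f : F →+* E) {A : Matrix ι ι F} {B : Matrix κ κ F} (h : Cong A B) :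
    Cong (A.map f) (B.map f) := by
  obtain ⟨k, k', h1, h2, rfl⟩ := h
  refine ⟨k.map f, k'.map f, ?_, ?_, ?_⟩
  · rw [← Matrix.map_mul, h1]; simp
  · rw [← Matrix.map_mul, h2]; simp
  · simp [Matrix.map_mul, transpose_map]

theorem Cong.sub (A : Matrix ι ι F) (e : κ ≃ ι) : Cong A (A.submatrix e e) := by
  refine ⟨(1 : Matrix ι ι F).submatrix id e, (1 : Matrix ι ι F).submatrix e id, ?_, ?_, ?_⟩
  · rw [Matrix.submatrix_mul_equiv]
    simp
  · rw [← Matrix.submatrix_mul _ _ _ _ _ Function.bijective_id]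
    simp
  · ext i k
    simp [Matrix.mul_apply, Matrix.one_apply]

theorem Cong.symmetric {A : Matrix ι ι F} {B : Matrix κ κ F} (h : Cong A B) (hA : Aᵀ = A) : Bᵀ = B := by
  obtain ⟨k, k', h1, h2, rfl⟩ := h
  simp [hA, Matrix.mul_assoc]

theorem Cong.card {A : Matrix ι ι F} {B : Matrix κ κ F} (h : Cong A B) : Fintype.card ι = Fintype.card κ := by
  obtain ⟨k, k', h1, h2, -⟩ := h
  have := Matrix.square_of_invertible k k' h1 h2
  exact this

theorem Cong.det {A : Matrix ι ι F} {B : Matrix κ κ F} (h : Cong A B) :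
    ∃ r, r ≠ 0 ∧ B.det = A.det * (r * r) := by
  have hc := h.card
  let e : κ ≃ ι := (Fintype.equivOfCardEq hc).symm
  obtain ⟨k, k', h1, h2, h4⟩ := h.trans (Cong.sub B e.symm)
  have h3 := congrArg Matrix.det h1
  rw [Matrix.det_mul, Matrix.det_one] at h3
  refine ⟨k.det, fun h0 => by simp [h0] at h3, ?_⟩
  have h5 := congrArg Matrix.det h4
  rw [Matrix.det_submatrix_equiv_self] at h5
  rw [← h5, Matrix.det_mul, Matrix.det_mul, Matrix.det_transpose]; ring

theorem Cong.block {A : Matrix ι ι F} {B : Matrix κ κ F} (h : Cong A B) (C : Matrix τ τ F) :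
    Cong (fromBlocks C 0 0 A) (fromBlocks C 0 0 B) := by
  obtain ⟨k, k', h1, h2, rfl⟩ := h
  refine ⟨fromBlocks 1 0 0 k, fromBlocks 1 0 0 k', ?_, ?_, ?_⟩
  · simp [fromBlocks_multiply, h1]
  · simp [fromBlocks_multiply, h2]
  · simp [fromBlocks_multiply, fromBlocks_transpose]

theorem Cong.scaleDiag (d s : ι → F) (hs : ∀ i, s i ≠ 0) :
    Cong (diagonal d) (diagonal (fun i => d i * (s i * s i))) := by
  refine ⟨diagonal s, diagonal (fun i => (s i)⁻¹), ?_, ?_, ?_⟩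
  · rw [diagonal_mul_diagonal, ← diagonal_one]; congr 1; ext i; exact mul_inv_cancel₀ (hs i)
  · rw [diagonal_mul_diagonal, ← diagonal_one]; congr 1; ext i; exact inv_mul_cancel₀ (hs i)
  · rw [diagonal_transpose, diagonal_mul_diagonal, diagonal_mul_diagonal]; congr 1; ext i; ring

/-- `A` represents `c`. -/
def Rep (A : Matrix ι ι F) (c : F) : Prop := ∃ v : ι → F, v ⬝ᵥ (A *ᵥ v) = c

theorem Cong.rep {A : Matrix ι ι F} {B : Matrix κ κ F} (h : Cong A B) {c : F} (hB : Rep B c) : Rep A c := by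
  obtain ⟨k, k', h1, h2, rfl⟩ := h
  obtain ⟨v, hv⟩ := hB
  refine ⟨k *ᵥ v, ?_⟩
  rw [← hv, ← mulVec_mulVec, ← mulVec_mulVec, dotProduct_mulVec v, vecMul_transpose]

/-- one by one matrix -/
def one1 (c : F) : Matrix Unit Unit F := fun _ _ => c

theorem split_entry (A : Matrix ι ι F) (hA : Aᵀ = A) (i : ι) (hi : A i i ≠ 0) :
    ∃ B : Matrix {k // k ≠ i} {k // k ≠ i} F, Cong A (fromBlocks (one1 (A i i)) 0 0 B) := by
  let e : (Unit ⊕ {k // k ≠ i}) ≃ ι := 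
    { toFun := Sum.elim (fun _ => i) Subtype.val
      invFun := fun k => if h : k = i then Sum.inl () else Sum.inr ⟨k, h⟩
      left_inv := by
        rintro (_ | ⟨k, hk⟩)
        · simp
        · simp [hk]
      right_inv := by
        intro k
        by_cases h : k = i <;> simp [h] }
  have h1 := Cong.sub A e
  set A' := A.submatrix e e with hA'
  have hsym := h1.symmetric hA
  let w : Matrix Unit {k // k ≠ i} F := A'.toBlocks₁₂
  have hd : A' = fromBlocks (one1 (A i i)) w wᵀ A'.toBlocks₂₂ := by
    rw [← fromBlocks_toBlocks A']
    congr 1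
    · ext a b
      have := congrFun (congrFun hsym (Sum.inl b)) (Sum.inr a)
      exact this
  refine ⟨A'.toBlocks₂₂ - (A i i)⁻¹ • (wᵀ * w), h1.trans ?_⟩
  rw [hd]
  refine ⟨fromBlocks 1 (-(A i i)⁻¹ • w) 0 1, fromBlocks 1 ((A i i)⁻¹ • w) 0 1, ?_, ?_, ?_⟩
  · simp [fromBlocks_multiply]
  · simp [fromBlocks_multiply]
  · have h3 : one1 (A i i) * w = A i i • w := by
      ext a b; simp [Matrix.mul_apply, one1]
    have h4 : (A i i)⁻¹ • (wᵀ * one1 (A i i)) = wᵀ := by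
      ext a b; simp [Matrix.mul_apply, one1]; field_simp
    simp [fromBlocks_multiply, fromBlocks_transpose, h3, h4, hi, smul_smul]
    abel

theorem split (A : Matrix ι ι F) (hA : Aᵀ = A) {c : F} (hc : c ≠ 0) (h : Rep A c) :
    ∃ (i : ι) (B : Matrix {k // k ≠ i} {k // k ≠ i} F), Cong A (fromBlocks (one1 c) 0 0 B) := by
  obtain ⟨v, hv⟩ := h
  have : ∃ i, v i ≠ 0 := by
    by_contra hcon
    push Not at hcon
    have : v = 0 := funext hcon
    rw [this] at hv; simp at hv; exact hc hv.symm
  obtain ⟨i, hi⟩ := this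
  let k := (1 : Matrix ι ι F).updateCol i v
  have hk : k.det ≠ 0 := by
    simp only [k]
    rw [← cramer_apply, cramer_one]; simpa using hi
  have h1 : Cong A (kᵀ * A * k) := ⟨k, k⁻¹, mul_nonsing_inv _ hk.isUnit, nonsing_inv_mul _ hk.isUnit, rfl⟩
  have h2 : (kᵀ * A * k) i i = c := by
    rw [← hv, dotProduct_mulVec]
    simp only [k, Matrix.mul_apply, dotProduct, transpose_apply, updateCol_self, vecMul]
  obtain ⟨B, hB⟩ := split_entry (kᵀ * A * k) (h1.symmetric hA) i (by rw [h2]; exact hc)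
  rw [h2] at hB
  exact ⟨i, B, h1.trans hB⟩

theorem exists_rep (h2 : (2 : F) ≠ 0) (A : Matrix ι ι F) (hA : Aᵀ = A) (h0 : A ≠ 0) : ∃ c, c ≠ 0 ∧ Rep A c := by
  by_contra hcon
  push Not at hcon
  have hz : ∀ v, v ⬝ᵥ (A *ᵥ v) = 0 := by
    intro v; by_contra h
    exact hcon _ h ⟨v, rfl⟩
  apply h0
  ext i k
  have h3 := hz (Pi.single i 1 + Pi.single k 1)
  have h4 := hz (Pi.single i 1)
  have h5 := hz (Pi.single k 1)
  have h6 : A k i = A i k := congrFun (congrFun hA i) k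
  simp [mulVec_add, add_dotProduct, dotProduct_add, h6] at h3 h4 h5
  rw [h4, h5] at h3
  have : 2 * A i k = 0 := by linear_combination h3
  simpa [h2] using this

end cong
end OP

namespace OP
open Matrix
section witt
variable {F : Type*} [Field F]
variable {κ : Type*} [Fintype κ] [DecidableEq κ]

theorem one1_eq (c : F) : one1 c = c • (1 : Matrix Unit Unit F) := by
  ext; simp [one1]

theorem witt1 (h2 : (2 : F) ≠ 0) (c : F) (B B' : Matrix κ κ F) (hB' : B'.det ≠ 0)
    (h : Cong (fromBlocks (one1 c) 0 0 B) (fromBlocks (one1 c) 0 0 B')) : Cong B B' := by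
  obtain ⟨k, -, -, -, hk⟩ := h
  obtain ⟨a, Y, W, M, rfl⟩ : ∃ a Y W M, k = fromBlocks a Y W M :=
    ⟨_, _, _, _, (fromBlocks_toBlocks k).symm⟩
  obtain ⟨x, rfl⟩ : ∃ x, a = x • (1 : Matrix Unit Unit F) := ⟨a () (), by ext; simp⟩
  simp [fromBlocks_multiply, fromBlocks_transpose, one1_eq, fromBlocks_inj, smul_smul] at hk
  obtain ⟨e1, e2, e3, e4⟩ := hk
  obtain ⟨s, hs⟩ : ∃ s : F, -1 - 2 * s * x + s * s * (1 - x * x) = 0 := by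
    by_cases hx : 1 - x = 0
    · have hx' : 1 + x ≠ 0 := by
        intro h; apply h2; linear_combination h + hx
      exact ⟨-1 / (1 + x), by field_simp; ring⟩
    · exact ⟨1 / (1 - x), by field_simp; ring⟩
  have f1 : Wᵀ * B * W = (c * (1 - x * x)) • (1 : Matrix Unit Unit F) := by
    rw [eq_sub_of_add_eq' e1, ← sub_smul]; congr 1; ring
  have f2 : Wᵀ * B * M = -((x * c) • Y) := by
    rw [mul_comm x]; exact eq_neg_of_add_eq_zero_right e2
  have f3 : Mᵀ * B * W = -((x * c) • Yᵀ) := eq_neg_of_add_eq_zero_right e3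
  have f4 : Mᵀ * B * M = B' - c • (Yᵀ * Y) := eq_sub_of_add_eq' e4
  have key : (M + s • (W * Y))ᵀ * B * (M + s • (W * Y)) = B' := by
    calc _ = Mᵀ * B * M + s • ((Mᵀ * B * W) * Y) + s • (Yᵀ * (Wᵀ * B * M)) + (s * s) • (Yᵀ * (Wᵀ * B * W) * Y) := by
          simp [Matrix.add_mul, Matrix.mul_add, Matrix.mul_assoc, smul_smul, smul_add]
          abel
      _ = B' + (c * (-1 - 2 * s * x + s * s * (1 - x * x))) • (Yᵀ * Y) := by
          rw [f1, f2, f3, f4]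
          simp [smul_smul, Matrix.neg_mul, Matrix.mul_neg]
          ext u v
          simp
          ring
      _ = B' := by rw [hs]; simp
  have hd : (M + s • (W * Y)).det ≠ 0 := by
    intro h0
    apply hB'
    rw [← key, det_mul, h0, mul_zero]
  exact ⟨_, _, mul_nonsing_inv _ hd.isUnit, nonsing_inv_mul _ hd.isUnit, key⟩

/-- the equivalence used to peel off one index -/
def peel (n : ℕ) : Fin (n+1) ≃ Unit ⊕ Fin n where
  toFun := Fin.cases (Sum.inl ()) Sum.inr
  invFun := Sum.elim (fun _ => 0) Fin.succ
  left_inv := by intro i; refine Fin.cases ?_ (fun i => ?_) i <;> simp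
  right_inv := by rintro (_ | i) <;> simp

theorem cong_diag_cons {n : ℕ} (c : F) (d : Fin n → F) :
    Cong (fromBlocks (one1 c) 0 0 (diagonal d)) (diagonal (Fin.cons c d : Fin (n+1) → F)) := by
  convert Cong.sub _ (peel n) using 1
  ext i k
  refine Fin.cases ?_ (fun i => ?_) i <;> refine Fin.cases ?_ (fun k => ?_) k
  · simp [peel, one1]
  · simp [peel, one1, (Fin.succ_ne_zero _).symm]
  · simp [peel, one1, (Fin.succ_ne_zero _)]
  · simp [peel, diagonal_apply]

theorem splitFin {n : ℕ} (A : Matrix (Fin (n+1)) (Fin (n+1)) F) (hA : Aᵀ = A) {c : F} (hc : c ≠ 0)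
    (h : Rep A c) : ∃ B : Matrix (Fin n) (Fin n) F, Bᵀ = B ∧ Cong A (fromBlocks (one1 c) 0 0 B) ∧
      ∃ r, r ≠ 0 ∧ B.det = A.det * c * (r * r) := by
  obtain ⟨i, B, hB⟩ := split A hA hc h
  have hcard : Fintype.card (Fin n) = Fintype.card {k // k ≠ i} := by simp
  let e := Fintype.equivOfCardEq hcard
  have h1 := hB.trans ((Cong.sub B e).block (one1 c))
  refine ⟨_, ?_, h1, ?_⟩
  · have := h1.symmetric hA
    rw [fromBlocks_transpose, fromBlocks_inj] at this
    exact this.2.2.2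
  · obtain ⟨r, hr, hd⟩ := h1.det
    rw [det_fromBlocks_zero₂₁] at hd
    have : (one1 c).det = c := by simp [one1]
    rw [this] at hd
    refine ⟨r / c, div_ne_zero hr hc, ?_⟩
    field_simp
    rw [mul_comm, hd]; ring

theorem diagz (h2 : (2 : F) ≠ 0) : ∀ (n : ℕ) (A : Matrix (Fin n) (Fin n) F), Aᵀ = A → ∃ d : Fin n → F, Cong A (diagonal d) := by
  intro n
  induction n with
  | zero => intro A _; exact ⟨0, by convert Cong.refl A; ext i; exact i.elim0⟩
  | succ n ih =>
    intro A hA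
    by_cases h0 : A = 0
    · exact ⟨0, by
        rw [h0, show diagonal (0 : Fin (n+1) → F) = 0 from by simp]; exact Cong.refl _⟩
    · obtain ⟨c, hc, hr⟩ := exists_rep h2 A hA h0
      obtain ⟨B, hB, h1, -⟩ := splitFin A hA hc hr
      obtain ⟨d, hd⟩ := ih B hB
      exact ⟨_, (h1.trans (hd.block _)).trans (cong_diag_cons c d)⟩

theorem rep_diag {n : ℕ} (d v : Fin n → F) : Rep (diagonal d) (∑ i, d i * (v i * v i)) := by
  refine ⟨v, ?_⟩
  simp only [mulVec_diagonal, dotProduct]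
  exact Finset.sum_congr rfl fun i _ => by ring

theorem Arith.rep (H : Arith F) {m : ℕ} (A : Matrix (Fin (m+3)) (Fin (m+3)) F) (hA : Aᵀ = A) (hd : A.det ≠ 0)
    {e : F} (he : e ≠ 0) (hn : NS (-e * A.det)) : Rep A e := by
  obtain ⟨d, h⟩ := diagz H.two _ A hA
  obtain ⟨r, hr, hdet⟩ := h.det
  rw [det_diagonal] at hdet
  have hd0 : ∀ i, d i ≠ 0 := by
    intro i h0
    have := Finset.prod_eq_zero (Finset.mem_univ i) h0
    rw [this] at hdet
    exact mul_ne_zero hd (mul_ne_zero hr hr) hdet.symm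
  apply h.rep
  cases m with
  | zero =>
    obtain ⟨x, y, z, hx⟩ := H.tern (hd0 0) (hd0 1) (hd0 2) he (by
      rintro ⟨s, hs⟩
      apply hn
      refine ⟨s / r, ?_⟩
      rw [Fin.prod_univ_three] at hdet
      field_simp
      rw [← mul_assoc] at hdet
      linear_combination hs + (-e) * -hdet)
    have := rep_diag d ![x, y, z]
    rw [Fin.sum_univ_three] at this
    rw [← hx]; simpa using this
  | succ m =>
    obtain ⟨x, y, z, w, hx⟩ := H.quat (hd0 0) (hd0 1) (hd0 2) (hd0 3) he
    have := rep_diag d (Fin.cons x (Fin.cons y (Fin.cons z (Fin.cons w 0))))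
    rw [Fin.sum_univ_succ, Fin.sum_univ_succ, Fin.sum_univ_succ, Fin.sum_univ_succ] at this
    simp at this
    rw [← hx]
    convert this using 1
    simp only [add_assoc]
    rfl

/-- block sum of a diagonal matrix and another matrix -/
def bs {m : ℕ} (c : Fin m → F) (B : Matrix κ κ F) : Matrix (Fin m ⊕ κ) (Fin m ⊕ κ) F :=
  fromBlocks (diagonal c) 0 0 B

theorem bs_succ {m : ℕ} (c0 : F) (c : Fin m → F) (B : Matrix κ κ F) :
    Cong (fromBlocks (one1 c0) 0 0 (bs c B)) (bs (Fin.cons c0 c : Fin (m+1) → F) B) := by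
  convert Cong.sub _ (((peel m).sumCongr (Equiv.refl κ)).trans (Equiv.sumAssoc _ _ _)) using 1
  ext i k
  rcases i with i | i <;> rcases k with k | k
  · refine Fin.cases ?_ (fun i => ?_) i <;> refine Fin.cases ?_ (fun k => ?_) k
    · simp [bs, peel, one1]
    · simp [bs, peel, one1, (Fin.succ_ne_zero _).symm]
    · simp [bs, peel, one1, (Fin.succ_ne_zero _)]
    · simp [bs, peel, diagonal_apply]
  · refine Fin.cases ?_ (fun i => ?_) i <;> simp [bs, peel]
  · refine Fin.cases ?_ (fun k => ?_) k <;> simp [bs, peel]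
  · simp [bs]

theorem bs_zero (c : Fin 0 → F) (B : Matrix κ κ F) : Cong B (bs c B) := by
  convert Cong.sub _ (Equiv.emptySum (Fin 0) κ) using 1
  ext i k
  rcases i with i | i
  · exact i.elim0
  rcases k with k | k
  · exact k.elim0
  simp [bs]

theorem bs_det {m : ℕ} (c : Fin m → F) (B : Matrix κ κ F) : (bs c B).det = (∏ i, c i) * B.det := by
  rw [bs, det_fromBlocks_zero₂₁, det_diagonal]

theorem witt (h2 : (2 : F) ≠ 0) (B B' : Matrix κ κ F) (hB' : B'.det ≠ 0) : ∀ (m : ℕ) (c : Fin m → F) (_ : ∀ i, c i ≠ 0)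
    (_ : Cong (bs c B) (bs c B')), Cong B B' := by
  intro m
  induction m with
  | zero => 
    intro c _ h
    exact ((bs_zero c B).trans h).trans (bs_zero c B').symm
  | succ m ih =>
    intro c hc h
    rw [← Fin.cons_self_tail c] at h
    apply ih (Fin.tail c) (fun i => hc _)
    apply witt1 h2 (c 0)
    · rw [bs_det]
      exact mul_ne_zero (Finset.prod_ne_zero_iff.2 fun i _ => hc _) hB'
    · exact ((bs_succ _ _ _).trans h).trans (bs_succ _ _ _).symm

theorem Arith.nf (H : Arith F) : ∀ (m : ℕ) (D D' : F), D ≠ 0 → D' ≠ 0 → ∃ c : Fin m → F, (∀ i, c i ≠ 0) ∧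
    (1 ≤ m → NS (-(D * ∏ i, c i))) ∧
    ∀ A : Matrix (Fin (m+2)) (Fin (m+2)) F, Aᵀ = A → 
      (∃ r, r ≠ 0 ∧ (A.det = D * (r * r) ∨ A.det = D' * (r * r))) → 
      ∃ a d : F, Cong A (bs c (diagonal ![a, d])) := by
  intro m
  induction m with
  | zero =>
    intro D D' hD hD'
    refine ⟨0, fun i => i.elim0, by simp, ?_⟩
    intro A hA _
    obtain ⟨d, hd⟩ := diagz H.two _ A hA
    refine ⟨d 0, d 1, hd.trans ?_⟩
    have : d = ![d 0, d 1] := by ext i; fin_cases i <;> rfl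
    rw [this]
    exact bs_zero _ _
  | succ m ih =>
    intro D D' hD hD'
    obtain ⟨c0, hc0, hn, hn'⟩ := H.H2 (-D) (-D') (neg_ne_zero.2 hD) (neg_ne_zero.2 hD')
    obtain ⟨c, hc, hcn, hA⟩ := ih (D * c0) (D' * c0) (mul_ne_zero hD hc0) (mul_ne_zero hD' hc0)
    refine ⟨Fin.cons c0 c, ?_, ?_, ?_⟩
    · intro i
      refine Fin.cases ?_ (fun i => ?_) i
      · simpa using hc0
      · simpa using hc i
    · intro _
      rw [Fin.prod_univ_succ]
      simp only [Fin.cons_zero, Fin.cons_succ]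
      rcases Nat.eq_zero_or_pos m with rfl | hm
      · rw [NS]; simpa using hn
      · rw [← mul_assoc]; exact hcn hm
    · rintro A hs ⟨r, hr, hdet⟩
      have hd0 : A.det ≠ 0 := by
        rcases hdet with h | h <;> rw [h]
        · exact mul_ne_zero hD (mul_ne_zero hr hr)
        · exact mul_ne_zero hD' (mul_ne_zero hr hr)
      have hrep : Rep A c0 := by
        apply H.rep A hs hd0 hc0
        rintro ⟨s, hs⟩
        rcases hdet with h | h <;> rw [h] at hs
        · exact hn ⟨s / r, by field_simp; linear_combination hs⟩
        · exact hn' ⟨s / r, by field_simp; linear_combination hs⟩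
      obtain ⟨B, hB, h1, t, ht, hBd⟩ := splitFin A hs hc0 hrep
      obtain ⟨a, d, had⟩ := hA B hB ⟨r * t, mul_ne_zero hr ht, by
        rcases hdet with h | h <;> rw [hBd, h]
        · left; ring
        · right; ring⟩
      exact ⟨a, d, (h1.trans (had.block _)).trans (bs_succ _ _ _)⟩

end witt
end OP

namespace OP
open Matrix
section two
variable {F : Type*} [Field F]

theorem bin_cong {a a' δ : F} (ha : a ≠ 0) (h : Nm (-δ) (a * a')) :
    Cong (diagonal ![a, a * δ]) (diagonal ![a', a' * δ]) := by
  obtain ⟨h0, x, y, hxy⟩ := h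
  let k : Matrix (Fin 2) (Fin 2) F := !![x / a, -δ * (y / a); y / a, x / a]
  have ha' : a' = a * (x / a * (x / a) + δ * (y / a * (y / a))) := by
    field_simp
    linear_combination hxy
  have hd : k.det ≠ 0 := by
    have : a * a * k.det = a * a' := by
      rw [ha']
      simp [k, det_fin_two]; ring
    intro h; rw [h] at this; exact h0 (by rw [← this]; ring)
  refine ⟨k, k⁻¹, mul_nonsing_inv _ hd.isUnit, nonsing_inv_mul _ hd.isUnit, ?_⟩
  rw [ha']
  ext i l
  fin_cases i <;> fin_cases l <;> simp [k, Matrix.mul_apply, Fin.sum_univ_two] <;> ring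

theorem bin_nm {a a' δ : F} (ha : a ≠ 0) (ha' : a' ≠ 0)
    (h : Cong (diagonal ![a, a * δ]) (diagonal ![a', a' * δ])) : Nm (-δ) (a * a') := by
  obtain ⟨k, -, -, -, hk⟩ := h
  refine ⟨mul_ne_zero ha ha', a * k 0 0, a * k 1 0, ?_⟩
  have := congrFun (congrFun hk 0) 0
  simp [Matrix.mul_apply, Fin.sum_univ_two] at this
  rw [← this]; ring

theorem map_diag2 {E : Type*} [Field E] (f : F →+* E) (a b : F) :
    (diagonal ![a, b]).map f = diagonal ![f a, f b] := by
  ext i l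
  fin_cases i <;> fin_cases l <;> simp

theorem map_bs {κ : Type*} [Fintype κ] [DecidableEq κ] {E : Type*} [Field E] (f : F →+* E) {m : ℕ} (c : Fin m → F) (B : Matrix κ κ F) :
    (bs c B).map f = bs (fun i => f (c i)) (B.map f) := by
  simp [bs, fromBlocks_map, diagonal_map]

theorem scale2 (a d d' s : F) (hs : s ≠ 0) (h : d' = d * (s * s)) : Cong (diagonal ![a, d]) (diagonal ![a, d']) := by
  have := Cong.scaleDiag ![a, d] ![1, s] (by intro i; fin_cases i <;> simp [hs])
  convert this using 2
  ext i; fin_cases i <;> simp [h]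

theorem two_classes (H : Arith F) {E : Type*} [Field E] (f : F →+* E) (θ : F) (hθ0 : θ ≠ 0) (hθ : NS θ) (i : E)
    (hi : i * i = f θ) (m : ℕ) (A0 : Matrix (Fin (m+2)) (Fin (m+2)) F) (hA0 : A0ᵀ = A0) (hd0 : A0.det ≠ 0)
    (D : F) (hD : D ≠ 0) (e : E) (hDe : f D = f A0.det * (e * e)) (hm : 1 ≤ m ∨ NS (-D)) :
    ∃ Q1 Q2 : Matrix (Fin (m+2)) (Fin (m+2)) F, (Q1ᵀ = Q1 ∧ ∃ r, r ≠ 0 ∧ Q1.det = D * (r * r)) ∧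
      (Q2ᵀ = Q2 ∧ ∃ r, r ≠ 0 ∧ Q2.det = D * (r * r)) ∧
      Cong (A0.map f) (Q1.map f) ∧ Cong (A0.map f) (Q2.map f) ∧ ¬ Cong Q1 Q2 ∧
      ∀ A : Matrix (Fin (m+2)) (Fin (m+2)) F, Aᵀ = A → (∃ r, r ≠ 0 ∧ A.det = D * (r * r)) → Cong Q1 A ∨ Cong Q2 A := by
  obtain ⟨c, hc, hcn, hnf⟩ := H.nf m D A0.det hD hd0
  set P := ∏ i, c i with hP
  have hP0 : P ≠ 0 := Finset.prod_ne_zero_iff.2 fun i _ => hc i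
  have he : e ≠ 0 := by
    rintro rfl
    simp at hDe; exact hD hDe
  have hns : NS (-(D * P)) := by
    rcases Nat.eq_zero_or_pos m with rfl | h
    · have : P = 1 := by simp [hP]
      rw [this, mul_one]
      rcases hm with h | h
      · omega
      · exact h
    · exact hcn h
  set δ := D * P with hδ
  have hδ0 : δ ≠ 0 := mul_ne_zero hD hP0
  -- normal forms
  have norm : ∀ (D1 : F), D1 ≠ 0 → ∀ A : Matrix (Fin (m+2)) (Fin (m+2)) F, (∃ r, r ≠ 0 ∧ A.det = D1 * (r * r)) →
      (∃ a d : F, Cong A (bs c (diagonal ![a, d]))) → ∃ a, a ≠ 0 ∧ Cong A (bs c (diagonal ![a, a * (D1 * P)])) := by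
    rintro D1 hD1 A ⟨r, hr, hA⟩ ⟨a, d, h⟩
    obtain ⟨s, hs, hdet⟩ := h.det
    rw [bs_det, hA, det_diagonal, Fin.prod_univ_two] at hdet
    simp only [Matrix.cons_val_zero, Matrix.cons_val_one] at hdet
    rw [← hP] at hdet
    have hne : P * (a * d) ≠ 0 := by
      rw [hdet]; exact mul_ne_zero (mul_ne_zero hD1 (mul_ne_zero hr hr)) (mul_ne_zero hs hs)
    have ha : a ≠ 0 := left_ne_zero_of_mul (right_ne_zero_of_mul hne)
    refine ⟨a, ha, h.trans (Cong.block (scale2 a d _ (a * P / (r * s)) (by positivity) ?_) _)⟩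
    field_simp
    linear_combination -hdet
  let eqv : Fin (m+2) ≃ Fin m ⊕ Fin 2 := finSumFinEquiv.symm
  let Q : F → Matrix (Fin (m+2)) (Fin (m+2)) F := fun a => (bs c (diagonal ![a, a * δ])).submatrix eqv eqv
  have hQ : ∀ a, Cong (bs c (diagonal ![a, a * δ])) (Q a) := fun a => Cong.sub _ _
  have hQs : ∀ a, (Q a)ᵀ = Q a := by
    intro a
    apply (hQ a).symmetric
    simp [bs, fromBlocks_transpose]
  have hQd : ∀ a, a ≠ 0 → ∃ r, r ≠ 0 ∧ (Q a).det = D * (r * r) := by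
    intro a ha
    refine ⟨P * a, mul_ne_zero hP0 ha, ?_⟩
    simp only [Q]
    rw [det_submatrix_equiv_self, bs_det, det_diagonal, Fin.prod_univ_two]
    simp [hδ, ← hP]; ring
  have hQE : ∀ a, a ≠ 0 → Cong (A0.map f) ((Q a).map f) := by
    intro a ha
    obtain ⟨b, hb, h⟩ := norm A0.det hd0 A0 ⟨1, one_ne_zero, by ring⟩
      (hnf A0 hA0 ⟨1, one_ne_zero, by right; ring⟩)
    refine (h.map f).trans (Cong.trans ?_ ((hQ a).map f))
    rw [map_bs, map_bs]
    apply Cong.block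
    rw [map_diag2, map_diag2]
    have h1 := H.hilb f θ hθ0 hθ i hi (x := -(A0.det * P)) (y := b * a)
      (neg_ne_zero.2 (mul_ne_zero hd0 hP0)) (mul_ne_zero hb ha)
    rw [map_neg, map_mul f b a] at h1
    have h3 := bin_cong (by simpa using hb) h1
    rw [← map_mul, ← map_mul] at h3
    refine h3.trans (scale2 _ _ _ e he ?_)
    rw [hδ]
    simp only [map_mul, hDe]
    ring
  obtain ⟨t, ht, htn⟩ := H.ex (-δ) (neg_ne_zero.2 hδ0) hns
  refine ⟨Q 1, Q t, ⟨hQs 1, hQd 1 one_ne_zero⟩, ⟨hQs t, hQd t ht⟩, hQE 1 one_ne_zero, hQE t ht, ?_, ?_⟩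
  · intro h
    apply htn
    have h1 := witt H.two _ _ (by
      rw [det_diagonal, Fin.prod_univ_two]
      exact mul_ne_zero ht (mul_ne_zero ht hδ0)) m c hc (((hQ 1).trans h).trans (hQ t).symm)
    have := bin_nm one_ne_zero ht h1
    simpa using this
  · rintro A hA ⟨r, hr, hdet⟩
    obtain ⟨a, ha, h⟩ := norm D hD A ⟨r, hr, hdet⟩ (hnf A hA ⟨r, hr, Or.inl hdet⟩)
    by_cases hn : Nm (-δ) a
    · left
      refine (hQ 1).symm.trans (Cong.trans ?_ h.symm)
      exact Cong.block (bin_cong one_ne_zero (by simpa using hn)) _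
    · right
      refine (hQ t).symm.trans (Cong.trans ?_ h.symm)
      exact Cong.block (bin_cong ht (H.nmul (neg_ne_zero.2 hδ0) ht ha htn hn)) _

end two
end OP

namespace OP
open Matrix
section fin
variable {F E : Type} [Field F] [Field E]

theorem refl_ex (h2 : (2 : F) ≠ 0) {n : ℕ} (J : Matrix (Fin (n+1)) (Fin (n+1)) F) (hJ : Jᵀ = J) :
    ∃ r : Matrix (Fin (n+1)) (Fin (n+1)) F, rᵀ * J * r = J ∧ r.det = -1 := by
  obtain ⟨d, k, k', h1, h3, h4⟩ := diagz h2 _ J hJ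
  let s : Matrix (Fin (n+1)) (Fin (n+1)) F := diagonal (Fin.cons (-1) 1)
  have hs : sᵀ * diagonal d * s = diagonal d := by
    simp only [s, diagonal_transpose, diagonal_mul_diagonal]
    congr 1; ext i
    refine Fin.cases ?_ (fun i => ?_) i <;> simp
  have h5 : k'ᵀ * kᵀ = 1 := by rw [← transpose_mul, h1, transpose_one]
  refine ⟨k * s * k', ?_, ?_⟩
  · calc (k * s * k')ᵀ * J * (k * s * k') = k'ᵀ * (sᵀ * (kᵀ * J * k) * s) * k' := by
          simp only [transpose_mul, Matrix.mul_assoc]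
      _ = k'ᵀ * (kᵀ * J * k) * k' := by rw [h4, hs]
      _ = (k'ᵀ * kᵀ) * J * (k * k') := by simp only [Matrix.mul_assoc]
      _ = J := by rw [h5, h1]; simp
  · have h6 : k.det * k'.det = 1 := by rw [← det_mul, h1, det_one]
    have h7 : s.det = -1 := by simp [s, Fin.prod_univ_succ]
    rw [det_mul, det_mul, h7]
    linear_combination -h6

theorem h90 [CharZero E] (s : E →+* E) (i : E) (hi0 : i ≠ 0) (hi : s i = -i) {n : ℕ}
    (x : Matrix (Fin n) (Fin n) E) (hx : x * x.map s = 1) :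
    ∃ h : Matrix (Fin n) (Fin n) E, h.det ≠ 0 ∧ x * h.map s = h := by
  let P : Matrix (Fin n) (Fin n) (Polynomial E) :=
    (Polynomial.X + Polynomial.C i) • 1 + (Polynomial.X - Polynomial.C i) • x.map Polynomial.C
  have hev : ∀ t : E, P.det.eval t = ((t + i) • (1 : Matrix (Fin n) (Fin n) E) + (t - i) • x).det := by
    intro t
    rw [← Polynomial.coe_evalRingHom, RingHom.map_det]
    congr 1
    ext a b
    simp [P, Matrix.one_apply]
    split_ifs <;> simp
  have hP : P.det ≠ 0 := by
    intro h0
    have := hev i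
    rw [h0] at this
    rw [sub_self, zero_smul, add_zero, det_smul, det_one, Polynomial.eval_zero, mul_one] at this
    have h2 : i + i ≠ 0 := by
      rw [← two_mul]; exact mul_ne_zero two_ne_zero hi0
    exact pow_ne_zero _ h2 this.symm
  obtain ⟨t, ht⟩ : ∃ t : ℕ, P.det.eval (t : E) ≠ 0 := by
    by_contra hcon
    push Not at hcon
    apply hP
    apply Polynomial.eq_zero_of_infinite_isRoot
    refine Set.Infinite.mono ?_ (Set.infinite_range_of_injective (Nat.cast_injective (R := E)))
    rintro _ ⟨t, rfl⟩
    exact hcon t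
  rw [hev] at ht
  refine ⟨_, ht, ?_⟩
  have : ((((t : E) + i) • (1 : Matrix (Fin n) (Fin n) E) + ((t : E) - i) • x).map s)
      = ((t : E) - i) • (1 : Matrix (Fin n) (Fin n) E) + ((t : E) + i) • x.map s := by
    ext a b
    simp [hi, Matrix.one_apply]
    split_ifs <;> simp [hi, sub_eq_add_neg]
  rw [this, Matrix.mul_add, Matrix.mul_smul, Matrix.mul_smul, hx, Matrix.mul_one, add_comm]

theorem cancel_cong {n : ℕ} {h a b : Matrix (Fin n) (Fin n) E} (hd : h.det ≠ 0) (e : hᵀ * a * h = hᵀ * b * h) : a = b := by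
  have h1 : IsUnit h.det := hd.isUnit
  have h2 : IsUnit hᵀ.det := by rwa [det_transpose]
  have e1 := congrArg (fun m => hᵀ⁻¹ * m * h⁻¹) e
  simp only [Matrix.mul_assoc] at e1
  rw [mul_nonsing_inv _ h1, Matrix.mul_one, Matrix.mul_one, nonsing_inv_mul_cancel_left _ _ h2,
    nonsing_inv_mul_cancel_left _ _ h2] at e1
  exact e1

theorem cancel_r {n : ℕ} {h a b : Matrix (Fin n) (Fin n) E} (hd : h.det ≠ 0) (e : a * h = b * h) : a = b := by
  have e1 := congrArg (fun m => m * h⁻¹) e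
  simpa [Matrix.mul_assoc, mul_nonsing_inv _ hd.isUnit] using e1

theorem cancel_l {n : ℕ} {h a b : Matrix (Fin n) (Fin n) E} (hd : h.det ≠ 0) (e : h * a = h * b) : a = b := by
  have e1 := congrArg (fun m => h⁻¹ * m) e
  simpa [← Matrix.mul_assoc, nonsing_inv_mul _ hd.isUnit] using e1

theorem det_map' (s : F →+* E) {n : ℕ} (h : Matrix (Fin n) (Fin n) F) : (h.map s).det = s h.det := by
  rw [RingHom.map_det]; rfl

theorem descend (f : F →+* E) (s : E →+* E) (hfix : ∀ x, s x = x → ∃ y, f y = x) {n : ℕ}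
    (h : Matrix (Fin n) (Fin n) E) (hh : h.map s = h) : ∃ k : Matrix (Fin n) (Fin n) F, k.map f = h := by
  have : ∀ a b, ∃ y, f y = h a b := fun a b => hfix _ (congrFun (congrFun hh a) b)
  choose k hk using this
  exact ⟨Matrix.of k, by ext a b; simp [hk]⟩

theorem map_fix (f : F →+* E) (s : E →+* E) (hf : ∀ y, s (f y) = f y) {n : ℕ}
    (k : Matrix (Fin n) (Fin n) F) : (k.map f).map s = k.map f := by
  ext a b; simp [hf]

theorem map_inj (f : F →+* E) {n : ℕ} {k l : Matrix (Fin n) (Fin n) F} (h : k.map f = l.map f) : k = l := by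
  ext a b
  exact f.injective (congrFun (congrFun h a) b)

theorem orb_of_cong (h2 : (2 : F) ≠ 0) (f : F →+* E) (s : E →+* E) (hf : ∀ y, s (f y) = f y)
    {n : ℕ} (j : Matrix (Fin (n+1)) (Fin (n+1)) E) (hj : j.det ≠ 0)
    (x₁ x₂ h₁ h₂ : Matrix (Fin (n+1)) (Fin (n+1)) E) (hd₁ : h₁.det ≠ 0) (hd₂ : h₂.det ≠ 0)
    (e₁ : x₁ * h₁.map s = h₁) (e₂ : x₂ * h₂.map s = h₂) (J₁ J₂ : Matrix (Fin (n+1)) (Fin (n+1)) F)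
    (hs₁ : J₁ᵀ = J₁) (k₁ : h₁ᵀ * j * h₁ = J₁.map f) (k₂ : h₂ᵀ * j * h₂ = J₂.map f) (hc : Cong J₂ J₁) :
    OrthPair.orbSG s j x₁ x₂ := by
  obtain ⟨l, l', hl, -, hJ⟩ := hc
  have key : ∀ l : Matrix (Fin (n+1)) (Fin (n+1)) F, l.det ≠ 0 → lᵀ * J₂ * l = J₁ →
      (∃ g, OrthPair.Gj j g ∧ g * h₁ = h₂ * l.map f ∧ x₂ = g * x₁ * (g.map s)⁻¹) := by
    intro l hl hJ
    have hg : (h₂ * l.map f * h₁⁻¹) * h₁ = h₂ * l.map f := by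
      rw [Matrix.mul_assoc, nonsing_inv_mul _ hd₁.isUnit, Matrix.mul_one]
    have hlf : (l.map f).det ≠ 0 := by rw [det_map']; simpa using hl
    set g := h₂ * l.map f * h₁⁻¹ with hgdef
    have hgd : g.det ≠ 0 := by
      rw [hgdef, det_mul, det_mul, det_nonsing_inv]
      exact mul_ne_zero (mul_ne_zero hd₂ hlf) (by simpa using hd₁)
    refine ⟨g, ⟨(isUnit_iff_isUnit_det _).2 hgd.isUnit, ?_⟩, hg, ?_⟩
    · apply cancel_cong hd₁
      calc h₁ᵀ * (gᵀ * j * g) * h₁ = (g * h₁)ᵀ * j * (g * h₁) := by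
            simp only [transpose_mul, Matrix.mul_assoc]
        _ = (l.map f)ᵀ * (h₂ᵀ * j * h₂) * (l.map f) := by
            rw [hg]; simp only [transpose_mul, Matrix.mul_assoc]
        _ = (lᵀ * J₂ * l).map f := by rw [k₂]; simp only [Matrix.map_mul, transpose_map]
        _ = h₁ᵀ * j * h₁ := by rw [hJ, k₁]
    · have hgs : (g.map s).det ≠ 0 := by rw [det_map']; simpa using hgd
      have hhs : (h₁.map s).det ≠ 0 := by rw [det_map']; simpa using hd₁
      apply cancel_r hgs
      rw [Matrix.mul_assoc (g * x₁), nonsing_inv_mul _ hgs.isUnit, Matrix.mul_one]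
      apply cancel_r hhs
      rw [Matrix.mul_assoc, ← Matrix.map_mul, hg, Matrix.map_mul, map_fix f s hf, ← Matrix.mul_assoc, e₂,
        Matrix.mul_assoc, e₁, hg]
  have hld : l.det ≠ 0 := by
    intro h0
    have := congrArg Matrix.det hl
    rw [det_mul, h0] at this; simp at this
  obtain ⟨g, hg, hgh, hx⟩ := key l hld hJ
  have hdg : g.det = 1 ∨ g.det = -1 := by
    have := congrArg Matrix.det hg.2
    rw [det_mul, det_mul, det_transpose] at this
    have h3 : j.det * (g.det * g.det) = j.det * 1 := by linear_combination this
    exact mul_self_eq_one_iff.1 (mul_left_cancel₀ hj h3)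
  rcases hdg with h | h
  · exact ⟨g, hg, h, hx⟩
  · obtain ⟨r, hr, hrd⟩ := refl_ex h2 J₁ hs₁
    obtain ⟨g', hg', hgh', hx'⟩ := key (l * r) (by rw [det_mul, hrd]; simpa using hld) (by
      rw [transpose_mul, ← hr, ← hJ]; simp only [Matrix.mul_assoc])
    refine ⟨g', hg', ?_, hx'⟩
    have d1 := congrArg Matrix.det hgh
    have d2 := congrArg Matrix.det hgh'
    rw [det_mul, det_mul, h] at d1
    rw [det_mul, det_mul, det_map', det_mul, hrd, map_mul, ← det_map'] at d2
    simp at d2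
    have : g'.det * h₁.det = 1 * h₁.det := by linear_combination d2 + d1
    exact mul_right_cancel₀ hd₁ this

theorem cong_of_orb (f : F →+* E) (s : E →+* E) (hfix : ∀ x, s x = x → ∃ y, f y = x)
    {n : ℕ} (j : Matrix (Fin n) (Fin n) E)
    (x₁ x₂ h₁ h₂ : Matrix (Fin n) (Fin n) E) (hd₁ : h₁.det ≠ 0) (hd₂ : h₂.det ≠ 0)
    (e₁ : x₁ * h₁.map s = h₁) (e₂ : x₂ * h₂.map s = h₂) (J₁ J₂ : Matrix (Fin n) (Fin n) F)
    (k₁ : h₁ᵀ * j * h₁ = J₁.map f) (k₂ : h₂ᵀ * j * h₂ = J₂.map f) 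
    (ho : OrthPair.orbSG s j x₁ x₂) : Cong J₂ J₁ := by
  obtain ⟨g, ⟨-, hg⟩, hgd, hx⟩ := ho
  have hgd0 : g.det ≠ 0 := by rw [hgd]; exact one_ne_zero
  have hgs : (g.map s).det ≠ 0 := by rw [det_map']; simpa using hgd0
  have hx' : x₂ * g.map s = g * x₁ := by
    rw [hx, Matrix.mul_assoc, nonsing_inv_mul _ hgs.isUnit, Matrix.mul_one]
  set l := h₂⁻¹ * (g * h₁) with hl
  have hl2 : h₂ * l = g * h₁ := by
    rw [hl, mul_nonsing_inv_cancel_left _ _ hd₂.isUnit]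
  have hls : l.map s = l := by
    apply cancel_l hd₂
    have := congrArg (fun m => x₂ * m.map s) hl2
    simp only [Matrix.map_mul] at this
    rw [← Matrix.mul_assoc, e₂, ← Matrix.mul_assoc, hx', Matrix.mul_assoc, e₁] at this
    rw [this, hl2]
  obtain ⟨k, hk⟩ := descend f s hfix l hls
  have hkd : k.det ≠ 0 := by
    have : l.det ≠ 0 := by
      rw [hl, det_mul, det_mul, det_nonsing_inv, hgd]
      simpa using ⟨hd₂, hd₁⟩
    rw [← hk, det_map'] at this
    simpa using this
  refine ⟨k, k⁻¹, mul_nonsing_inv _ hkd.isUnit, nonsing_inv_mul _ hkd.isUnit, ?_⟩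
  apply map_inj f
  calc (kᵀ * J₂ * k).map f = (l)ᵀ * (J₂.map f) * l := by
        rw [← hk]; simp only [Matrix.map_mul, transpose_map]
    _ = (h₂ * l)ᵀ * j * (h₂ * l) := by rw [← k₂]; simp only [transpose_mul, Matrix.mul_assoc]
    _ = h₁ᵀ * (gᵀ * j * g) * h₁ := by rw [hl2]; simp only [transpose_mul, Matrix.mul_assoc]
    _ = J₁.map f := by rw [hg, k₁]

theorem orbits [CharZero E] (H : Arith F) (f : F →+* E) (s : E →+* E) (hss : ∀ x, s (s x) = x)
    (hf : ∀ y, s (f y) = f y) (hfix : ∀ x, s x = x → ∃ y, f y = x)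
    (i : E) (hi0 : i ≠ 0) (hi : s i = -i) (m : ℕ) (J : Matrix (Fin (m+2)) (Fin (m+2)) F) (hJ : Jᵀ = J)
    (hJd : J.det ≠ 0) (e ε : E) (he0 : e ≠ 0) (he : s e = ε * e) (hε : ε * ε = 1)
    (D : F) (hD : f D = f J.det * (e * e)) (hm : 1 ≤ m ∨ NS (-D)) :
    ∃ x₁ x₂, (OrthPair.Xj s (J.map f) x₁ ∧ x₁.det = ε) ∧ (OrthPair.Xj s (J.map f) x₂ ∧ x₂.det = ε) ∧
      ¬ OrthPair.orbSG s (J.map f) x₁ x₂ ∧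
      ∀ x, OrthPair.Xj s (J.map f) x → x.det = ε → OrthPair.orbSG s (J.map f) x₁ x ∨ OrthPair.orbSG s (J.map f) x₂ x := by
  obtain ⟨θ, hθ⟩ := hfix (i * i) (by rw [map_mul, hi]; ring)
  have hθ0 : θ ≠ 0 := by
    rintro rfl
    simp at hθ; exact hi0 hθ
  have hfJd : f J.det ≠ 0 := by simpa using hJd
  have h2i : i ≠ -i := by
    intro h
    have : (2 : E) * i = 0 := by linear_combination h
    simp at this; exact hi0 this
  have hθn : NS θ := by
    rintro ⟨r, rfl⟩
    rw [map_mul] at hθ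
    rcases mul_self_eq_mul_self_iff.1 hθ with h | h
    · rw [← h, hf, h] at hi; exact h2i hi
    · have h' : i = - f r := by rw [h]; ring
      rw [h', map_neg, hf, ← h'] at hi; exact h2i hi
  have hD0 : D ≠ 0 := by
    rintro rfl
    rw [map_zero] at hD
    exact mul_ne_zero hfJd (mul_ne_zero he0 he0) hD.symm
  have hε0 : ε ≠ 0 := left_ne_zero_of_mul (a := ε) (b := ε) (by rw [hε]; exact one_ne_zero)
  have hjd : (J.map f).det ≠ 0 := by rw [det_map']; exact hfJd
  have hjs := map_fix f s hf J
  obtain ⟨Q1, Q2, ⟨hs1, r1, hr1, hq1⟩, ⟨hs2, r2, hr2, hq2⟩, c1, c2, hnc, hall⟩ :=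
    two_classes H f θ hθ0 hθn i hθ.symm m J hJ hJd D hD0 e hD hm
  have mk : ∀ (Q : Matrix (Fin (m+2)) (Fin (m+2)) F) (r : F), r ≠ 0 → Q.det = D * (r * r) → Cong (J.map f) (Q.map f) →
      ∃ x h, (OrthPair.Xj s (J.map f) x ∧ x.det = ε) ∧ h.det ≠ 0 ∧ x * h.map s = h ∧ hᵀ * J.map f * h = Q.map f := by
    rintro Q r hr hq ⟨h, h', hh, -, hQ⟩
    have hd : h.det ≠ 0 := by
      intro h0
      have := congrArg Matrix.det hh
      rw [det_mul, h0] at this; simp at this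
    have hds : (h.map s).det ≠ 0 := by rw [det_map']; simpa using hd
    have hx : (h * (h.map s)⁻¹) * h.map s = h := by
      rw [Matrix.mul_assoc, nonsing_inv_mul _ hds.isUnit, Matrix.mul_one]
    set x := h * (h.map s)⁻¹ with hxdef
    have hdx := congrArg Matrix.det hx
    rw [det_mul, det_map'] at hdx
    have hsd : s h.det = ε * h.det := by
      have h3 := congrArg Matrix.det hQ
      rw [det_mul, det_mul, det_transpose, det_map', det_map', hq, map_mul, hD] at h3
      have h4 : f J.det * (h.det * h.det) = f J.det * ((e * f r) * (e * f r)) := by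
        rw [map_mul] at h3; linear_combination h3
      rcases mul_self_eq_mul_self_iff.1 (mul_left_cancel₀ hfJd h4) with h | h
      · rw [h, map_mul, he, hf]; ring
      · rw [h, map_neg, map_mul, he, hf]; ring
    have hxd : x.det = ε := by
      rw [hsd] at hdx
      have : x.det * ε = 1 := mul_right_cancel₀ hd (by linear_combination hdx)
      linear_combination ε * this - x.det * hε
    refine ⟨x, h, ⟨⟨⟨(isUnit_iff_isUnit_det _).2 (by rw [hxd]; exact hε0.isUnit), ?_⟩, ?_⟩, hxd⟩, hd, hx, hQ⟩
    · apply cancel_cong hds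
      calc (h.map s)ᵀ * (xᵀ * J.map f * x) * h.map s = (x * h.map s)ᵀ * J.map f * (x * h.map s) := by
            simp only [transpose_mul, Matrix.mul_assoc]
        _ = (Q.map f).map s := by rw [hx, hQ, map_fix f s hf]
        _ = (h.map s)ᵀ * J.map f * h.map s := by
            rw [← hQ, Matrix.map_mul, Matrix.map_mul, hjs, transpose_map]
    · apply cancel_r hd
      have h5 := congrArg (fun m => m.map s) hx
      simp only [Matrix.map_mul] at h5
      have h6 : (h.map s).map s = h := by ext a b; simp [hss]
      rw [h6] at h5
      rw [Matrix.mul_assoc, h5, hx, Matrix.one_mul]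
  obtain ⟨x1, h1, X1, d1, e1, k1⟩ := mk Q1 r1 hr1 hq1 c1
  obtain ⟨x2, h2, X2, d2, e2, k2⟩ := mk Q2 r2 hr2 hq2 c2
  refine ⟨x1, x2, X1, X2, ?_, ?_⟩
  · intro ho
    exact hnc (cong_of_orb f s hfix _ x1 x2 h1 h2 d1 d2 e1 e2 Q1 Q2 k1 k2 ho).symm
  · intro x hx hxd
    obtain ⟨h, hd, hh⟩ := h90 s i hi0 hi x hx.2
    have hfixed : (hᵀ * J.map f * h).map s = hᵀ * J.map f * h := by
      calc (hᵀ * J.map f * h).map s = (h.map s)ᵀ * J.map f * h.map s := by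
            rw [Matrix.map_mul, Matrix.map_mul, hjs, transpose_map]
        _ = (h.map s)ᵀ * (xᵀ * J.map f * x) * h.map s := by rw [hx.1.2]
        _ = (x * h.map s)ᵀ * J.map f * (x * h.map s) := by
            simp only [transpose_mul, Matrix.mul_assoc]
        _ = _ := by rw [hh]
    obtain ⟨A, hA⟩ := descend f s hfix _ hfixed
    have hAs : Aᵀ = A := by
      apply map_inj f
      have hJf : (J.map f)ᵀ = J.map f := by rw [← transpose_map, hJ]
      rw [transpose_map, hA]
      simp only [transpose_mul, transpose_transpose, hJf, Matrix.mul_assoc]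
    have hdd : ∃ r, r ≠ 0 ∧ A.det = D * (r * r) := by
      have hdx := congrArg Matrix.det hh
      rw [det_mul, det_map', hxd] at hdx
      have hs : s h.det = ε * h.det := by linear_combination ε * hdx - s h.det * hε
      obtain ⟨r, hr⟩ := hfix (h.det / e) (by
        rw [map_div₀, hs, he]; field_simp)
      have hr' : h.det = f r * e := by rw [hr]; field_simp
      refine ⟨r, ?_, ?_⟩
      · rintro rfl
        rw [map_zero, zero_mul] at hr'; exact hd hr'
      · apply f.injective
        rw [← det_map', hA, det_mul, det_mul, det_transpose, det_map', hr', map_mul, map_mul, hD]; ring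
    rcases hall A hAs hdd with h | h
    · left
      exact orb_of_cong H.two f s hf _ hjd x1 x h1 _ d1 hd e1 hh Q1 A hs1 k1 hA.symm h.symm
    · right
      exact orb_of_cong H.two f s hf _ hjd x2 x h2 _ d2 hd e2 hh Q2 A hs2 k2 hA.symm h.symm

end fin
end OP

/-- In the orthogonal case: if `n ≥ 3`, or if `n = 2` and
`det j ∉ -F^{×2}`, then `SX^j` consists of exactly two `SG^j(E)`-orbits; and if `n ≥ 3`,
or if `n = 2` and `det j ∉ -ι²·F^{×2}`, then `X^j \ SX^j` consists of exactly two
`SG^j(E)`-orbits.  (`F` is the fixed field of `σ`, and `ι ∈ E \ F` satisfies `ι² ∈ F`.) -/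
theorem stmt_13 (p : ℕ) [Fact p.Prime]
    (E : Type) [Field E] [Algebra ℚ_[p] E] [FiniteDimensional ℚ_[p] E]
    (σ : E ≃ₐ[ℚ_[p]] E) (hσ1 : σ ≠ 1) (hσ2 : σ * σ = 1)
    (ι : E) (hι1 : σ ι ≠ ι) (hι2 : σ (ι * ι) = ι * ι)
    (n : ℕ) (hn : 1 ≤ n)
    (j : Matrix (Fin n) (Fin n) E)
    (hjF : ∀ a b, σ (j a b) = j a b) (hjU : IsUnit j) (hjsym : jᵀ = j) :
    -- exactly two orbits in SX^j
    ((3 ≤ n ∨ (n = 2 ∧ ¬ ∃ c, σ c = c ∧ c ≠ 0 ∧ j.det = -(c * c))) →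
      ∃ x₁ x₂, SXj ⇑σ j x₁ ∧ SXj ⇑σ j x₂ ∧ ¬ orbSG ⇑σ j x₁ x₂ ∧
        ∀ x, SXj ⇑σ j x → orbSG ⇑σ j x₁ x ∨ orbSG ⇑σ j x₂ x) ∧
    -- exactly two orbits in X^j \ SX^j
    ((3 ≤ n ∨ (n = 2 ∧ ¬ ∃ c, σ c = c ∧ c ≠ 0 ∧ j.det = -(ι * ι * (c * c)))) →
      ∃ x₁ x₂, (Xj ⇑σ j x₁ ∧ x₁.det ≠ 1) ∧ (Xj ⇑σ j x₂ ∧ x₂.det ≠ 1) ∧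
        ¬ orbSG ⇑σ j x₁ x₂ ∧
        ∀ x, Xj ⇑σ j x → x.det ≠ 1 → orbSG ⇑σ j x₁ x ∨ orbSG ⇑σ j x₂ x) := by
  have hσσ : ∀ x, σ (σ x) = x := fun x => by
    rw [← AlgEquiv.mul_apply, hσ2, AlgEquiv.one_apply]
  have hE0 : CharZero E := charZero_of_injective_algebraMap (algebraMap ℚ_[p] E).injective
  have hι : σ ι = -ι := by
    rw [map_mul] at hι2
    exact (mul_self_eq_mul_self_iff.1 hι2).resolve_left hι1
  have hι0 : ι ≠ 0 := by
    rintro rfl; exact hι1 (map_zero σ)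
  let K : IntermediateField ℚ_[p] E := IntermediateField.fixedField (Subgroup.zpowers σ)
  have hK : ∀ x, x ∈ K ↔ σ x = x := by
    intro x
    rw [IntermediateField.mem_fixedField_iff]
    constructor
    · intro h; exact h σ (Subgroup.mem_zpowers σ)
    · intro h g hg
      have : Subgroup.zpowers σ ≤ MulAction.stabilizer (E ≃ₐ[ℚ_[p]] E) x := by
        rw [Subgroup.zpowers_le]; exact h
      exact this hg
  have H : OP.Arith K := OP.exists_Arith p K
  let f : K →+* E := algebraMap K E
  have hf : ∀ y, (σ : E →+* E) (f y) = f y := fun y => (hK _).1 y.2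
  have hfix : ∀ x, (σ : E →+* E) x = x → ∃ y, f y = x := fun x hx => ⟨⟨x, (hK x).2 hx⟩, rfl⟩
  obtain ⟨J, rfl⟩ := OP.descend f (σ : E →+* E) hfix j (by ext a b; exact hjF a b)
  have hJ : Jᵀ = J := OP.map_inj f (by rw [transpose_map]; exact hjsym)
  have hJd : J.det ≠ 0 := by
    have h := ((isUnit_iff_isUnit_det _).1 hjU).ne_zero
    rw [OP.det_map'] at h
    exact (map_ne_zero f).1 h
  have hdj : (J.map f).det = f J.det := OP.det_map' f J
  have main : ∀ (e ε : E), e ≠ 0 → σ e = ε * e → ε * ε = 1 →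
      (3 ≤ n ∨ (n = 2 ∧ ¬ ∃ c, σ c = c ∧ c ≠ 0 ∧ (J.map f).det = -(e * e * (c * c)))) →
      ∃ x₁ x₂, (Xj ⇑σ (J.map f) x₁ ∧ x₁.det = ε) ∧ (Xj ⇑σ (J.map f) x₂ ∧ x₂.det = ε) ∧
        ¬ orbSG ⇑σ (J.map f) x₁ x₂ ∧
        ∀ x, Xj ⇑σ (J.map f) x → x.det = ε → orbSG ⇑σ (J.map f) x₁ x ∨ orbSG ⇑σ (J.map f) x₂ x := by
    intro e ε he0 he hε hcase
    obtain ⟨m, rfl⟩ : ∃ m, n = m + 2 := ⟨n - 2, by omega⟩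
    obtain ⟨D, hD⟩ := hfix (f J.det * (e * e)) (by
      rw [map_mul, hf, map_mul]
      change f J.det * (σ e * σ e) = _
      rw [he]; linear_combination f J.det * e * e * hε)
    refine OP.orbits H f (σ : E →+* E) hσσ hf hfix ι hι0 hι m J hJ hJd e ε he0 he hε D hD ?_
    rcases hcase with h | ⟨-, h⟩
    · left; omega
    · right
      rintro ⟨r, hr⟩
      have h1 : -(f J.det * (e * e)) = f r * f r := by
        rw [← hD, ← map_neg, hr, map_mul]
      have hfJ : f J.det ≠ 0 := (map_ne_zero f).2 hJd
      have hr0 : f r ≠ 0 := by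
        intro h0
        rw [h0, mul_zero, neg_eq_zero] at h1
        exact mul_ne_zero hfJ (mul_ne_zero he0 he0) h1
      have hσr : σ (f r) = f r := hf r
      refine h ⟨f r / (e * e), ?_, div_ne_zero hr0 (mul_ne_zero he0 he0), ?_⟩
      · rw [map_div₀, map_mul, he, hσr]
        rw [show ε * e * (ε * e) = e * e by linear_combination e * e * hε]
      · rw [hdj]
        field_simp
        linear_combination -h1
  constructor
  · intro hc
    obtain ⟨x₁, x₂, h1, h2, h3, h4⟩ := main 1 1 one_ne_zero (by simp) (by simp) (by simpa using hc)
    exact ⟨x₁, x₂, h1, h2, h3, fun x hx => h4 x hx.1 hx.2⟩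
  · intro hc
    obtain ⟨x₁, x₂, h1, h2, h3, h4⟩ := main ι (-1) hι0 (by rw [hι]; ring) (by ring) hc
    have hne : (-1 : E) ≠ 1 := by norm_num
    refine ⟨x₁, x₂, ⟨h1.1, by rw [h1.2]; exact hne⟩, ⟨h2.1, by rw [h2.2]; exact hne⟩, h3, ?_⟩
    intro x hx hxd
    apply h4 x hx
    have h5 := congrArg Matrix.det hx.1.2
    rw [det_mul, det_mul, det_transpose] at h5
    have hjd : (J.map f).det ≠ 0 := by rw [hdj]; exact (map_ne_zero f).2 hJd
    have h6 : (J.map f).det * (x.det * x.det) = (J.map f).det * 1 := by linear_combination h5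
    exact (mul_self_eq_one_iff.1 (mul_left_cancel₀ hjd h6)).resolve_left hxd
end

section
/- In the orthogonal case, let x ∈ X^j and let z ∈ GL_n(E) satisfy x = z·σ(z)^{-1}, and set y = transpose(z)·j·z (so y is an invertible symmetric matrix with entries in F). Then det y ∈ det j · F^{×2} if det x = 1, and det y ∈ ı²·det j · F^{×2} if det x = -1. -/
open Matrix

open OrthPair

/-- In the orthogonal case, let `x ∈ X^j` and let `z ∈ GL_n(E)` satisfy
`x = z·σ(z)⁻¹`, and set `y = zᵀ j z`.  Then `det y ∈ det j · F^{×2}` if `det x = 1`, and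
`det y ∈ ι²·det j·F^{×2}` if `det x = -1`.  (`F` is the fixed field of `σ`, and
`ι ∈ E \ F` satisfies `ι² ∈ F`.) -/
theorem stmt_14 (p : ℕ) [Fact p.Prime]
    (E : Type) [Field E] [Algebra ℚ_[p] E] [FiniteDimensional ℚ_[p] E]
    (σ : E ≃ₐ[ℚ_[p]] E) (hσ1 : σ ≠ 1) (hσ2 : σ * σ = 1)
    (ι : E) (hι1 : σ ι ≠ ι) (hι2 : σ (ι * ι) = ι * ι)
    (n : ℕ) (hn : 1 ≤ n)
    (j : Matrix (Fin n) (Fin n) E)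
    (hjF : ∀ a b, σ (j a b) = j a b) (hjU : IsUnit j) (hjsym : jᵀ = j)
    (x z : Matrix (Fin n) (Fin n) E)
    (hx : Xj ⇑σ j x) (hz : IsUnit z) (hxz : x = z * (z.map ⇑σ)⁻¹) :
    ((x.det = 1 → ∃ c, σ c = c ∧ c ≠ 0 ∧ (zᵀ * j * z).det = j.det * (c * c)) ∧
     (x.det = -1 → ∃ c, σ c = c ∧ c ≠ 0 ∧ (zᵀ * j * z).det = ι * ι * j.det * (c * c))) := by
  have hS : z.map ⇑σ = (σ : E →+* E).mapMatrix z := rfl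
  have hd : (z.map ⇑σ).det = σ z.det := by
    rw [hS, ← RingHom.map_det]; rfl
  have hz0 : z.det ≠ 0 := ((Matrix.isUnit_iff_isUnit_det z).1 hz).ne_zero
  have hsz0 : σ z.det ≠ 0 := by simpa using hz0
  have hxd : x.det * σ z.det = z.det := by
    rw [hxz, Matrix.det_mul, Matrix.det_nonsing_inv, hd, Ring.inverse_eq_inv', mul_assoc,
      inv_mul_cancel₀ hsz0, mul_one]
  have hι0 : ι ≠ 0 := by
    rintro rfl
    simp at hι1
  have hσι : σ ι = -ι := by
    rw [map_mul] at hι2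
    exact (mul_self_eq_mul_self_iff.1 hι2).resolve_left hι1
  constructor
  · intro h
    refine ⟨z.det, ?_, hz0, ?_⟩
    · rw [h, one_mul] at hxd
      exact hxd
    · simp only [Matrix.det_mul, Matrix.det_transpose]
      ring
  · intro h
    have h2 : σ z.det = -z.det := by
      rw [h] at hxd
      linear_combination -hxd
    refine ⟨z.det / ι, ?_, div_ne_zero hz0 hι0, ?_⟩
    · rw [map_div₀, h2, hσι, neg_div_neg_eq]
    · simp only [Matrix.det_mul, Matrix.det_transpose]
      field_simp
end

section
/- Let F be a non-archimedean local field of characteristic zero, E = F[ı] a quadratic extension with ı ∈ E \ F and ı² ∈ F, and let u ∈ F^× \ N_{E/F}(E^×). Set y₁ = diag(1, 1, -1) and y₂ = diag(ı², u, -ı²·u), both in GL_3(F). Then there is no g ∈ GL_3(F) with transpose(g)·y₁·g = y₂, but there exists z ∈ GL_3(E) with transpose(z)·y₁·z = y₂, and any such z automatically satisfies det z ∈ F^×. -/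
open Matrix

/-- Let `F` be a non-archimedean local field of characteristic zero,
`E = F[ι]` a quadratic extension with `ι ∈ E \ F` and `ι² ∈ F`, and let
`u ∈ F^× \ N_{E/F}(E^×)`.  Set `y₁ = diag(1,1,-1)` and `y₂ = diag(ι², u, -ι²·u)` in
`GL₃(F)`.  Then there is no `g ∈ GL₃(F)` with `gᵀ·y₁·g = y₂`, but there exists
`z ∈ GL₃(E)` with `zᵀ·y₁·z = y₂`, and any such `z` automatically satisfies
`det z ∈ F^×`.  (`F` is realized as the fixed field of the Galois involution `σ` of
`E/F`; the norm is `N_{E/F}(e) = e·σ(e)`.) -/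
theorem stmt_15 (p : ℕ) [Fact p.Prime]
    (E : Type) [Field E] [Algebra ℚ_[p] E] [FiniteDimensional ℚ_[p] E]
    (σ : E ≃ₐ[ℚ_[p]] E) (hσ1 : σ ≠ 1) (hσ2 : σ * σ = 1)
    (ι : E) (hι1 : σ ι ≠ ι) (hι2 : σ (ι * ι) = ι * ι)
    (u : E) (huF : σ u = u) (hu0 : u ≠ 0) (hu : ¬ ∃ e : E, u = e * σ e)
    (y₁ y₂ : Matrix (Fin 3) (Fin 3) E)
    (hy₁ : y₁ = Matrix.diagonal ![1, 1, -1])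
    (hy₂ : y₂ = Matrix.diagonal ![ι * ι, u, -(ι * ι * u)]) :
    -- no g ∈ GL₃(F) with gᵀ y₁ g = y₂
    (¬ ∃ g : Matrix (Fin 3) (Fin 3) E,
        IsUnit g ∧ (∀ a b, σ (g a b) = g a b) ∧ gᵀ * y₁ * g = y₂) ∧
    -- there exists z ∈ GL₃(E) with zᵀ y₁ z = y₂
    (∃ z : Matrix (Fin 3) (Fin 3) E, IsUnit z ∧ zᵀ * y₁ * z = y₂) ∧
    -- and any such z has determinant in F^×
    (∀ z : Matrix (Fin 3) (Fin 3) E, IsUnit z → zᵀ * y₁ * z = y₂ →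
      σ z.det = z.det ∧ z.det ≠ 0) := by
  have h2 : (2 : E) ≠ 0 := by
    haveI : CharZero E := charZero_of_injective_algebraMap (algebraMap ℚ_[p] E).injective
    exact two_ne_zero
  have hι0 : ι ≠ 0 := by
    rintro rfl
    simp at hι1
  have hσι : σ ι = -ι := by
    rw [map_mul] at hι2
    rcases mul_self_eq_mul_self_iff.mp hι2 with h | h
    · exact absurd h hι1
    · exact h
  subst hy₁ hy₂
  refine ⟨?_, ?_, ?_⟩
  · rintro ⟨g, hg, hgσ, hgy⟩
    have hdet : g.det ≠ 0 := ((Matrix.isUnit_iff_isUnit_det g).mp hg).ne_zero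
    obtain ⟨v, hv⟩ : ∃ v, v = g⁻¹ *ᵥ ![1, 0, 1] := ⟨_, rfl⟩
    have hgv : g *ᵥ v = ![1, 0, 1] := by
      rw [hv, Matrix.mulVec_mulVec, Matrix.mul_nonsing_inv _ (isUnit_iff_ne_zero.mpr hdet),
        Matrix.one_mulVec]
    have e0 := congrFun hgv 0
    have e1 := congrFun hgv 1
    have e2 := congrFun hgv 2
    simp [Matrix.mulVec, dotProduct, Fin.sum_univ_three] at e0 e1 e2
    have hgσv : g *ᵥ (fun i => σ (v i)) = ![1, 0, 1] := by
      have f0 := congrArg σ e0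
      have f1 := congrArg σ e1
      have f2 := congrArg σ e2
      simp only [map_add, map_mul, hgσ, map_one, map_zero] at f0 f1 f2
      ext i
      fin_cases i <;> simp [Matrix.mulVec, dotProduct, Fin.sum_univ_three, f0, f1, f2]
    have hσv : ∀ i, σ (v i) = v i := by
      have : (fun i => σ (v i)) = v :=
        Matrix.mulVec_injective_of_isUnit hg (hgσv.trans hgv.symm)
      exact fun i => congrFun this i
    have hq : v ⬝ᵥ ((gᵀ * Matrix.diagonal ![1, 1, -1] * g) *ᵥ v) = 0 := by
      rw [← Matrix.mulVec_mulVec, ← Matrix.mulVec_mulVec, hgv, Matrix.dotProduct_mulVec,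
        Matrix.vecMul_transpose, hgv]
      simp [Matrix.mulVec_diagonal, dotProduct, Fin.sum_univ_three]
    rw [hgy] at hq
    simp [Matrix.mulVec_diagonal, dotProduct, Fin.sum_univ_three] at hq
    by_cases hw : v 1 + ι * v 2 = 0
    · have hw' := congrArg σ hw
      simp only [map_add, map_mul, hσv, hσι, map_zero] at hw'
      have a1 : v 1 = 0 := by
        have : 2 * v 1 = 0 := by linear_combination hw + hw'
        exact (mul_eq_zero.mp this).resolve_left h2
      have a2 : v 2 = 0 := by
        rw [a1, zero_add] at hw
        exact (mul_eq_zero.mp hw).resolve_left hι0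
      have a0 : v 0 = 0 := by
        rw [a1, a2] at hq
        simpa [hι0] using hq
      simp [a0, a1, a2] at e0
    · apply hu
      have hw' : v 1 - ι * v 2 ≠ 0 := by
        intro h
        apply hw
        have := congrArg σ h
        simp only [map_sub, map_mul, hσv, hσι, map_zero] at this
        linear_combination this
      refine ⟨ι * v 0 / (v 1 + ι * v 2), ?_⟩
      have e : σ (ι * v 0 / (v 1 + ι * v 2)) = -ι * v 0 / (v 1 - ι * v 2) := by
        simp only [map_div₀, map_add, map_mul, hσv, hσι]
        congr 1
        ring
      rw [e]
      field_simp
      linear_combination hq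
  · refine ⟨!![ι, 0, 0; 0, (u + 1) / 2, ι * ((u - 1) / 2); 0, (u - 1) / 2, ι * ((u + 1) / 2)],
      ?_, ?_⟩
    · rw [Matrix.isUnit_iff_isUnit_det, isUnit_iff_ne_zero]
      have : (!![ι, 0, 0; 0, (u + 1) / 2, ι * ((u - 1) / 2);
          0, (u - 1) / 2, ι * ((u + 1) / 2)]).det = ι * ι * u := by
        rw [Matrix.det_fin_three]
        simp
        field_simp
        ring
      rw [this]
      exact mul_ne_zero (mul_ne_zero hι0 hι0) hu0
    · ext i j
      fin_cases i <;> fin_cases j <;>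
        simp [Matrix.mul_apply, Fin.sum_univ_three, Matrix.diagonal] <;> field_simp <;> ring
  · intro z hz h
    refine ⟨?_, ((Matrix.isUnit_iff_isUnit_det z).mp hz).ne_zero⟩
    have hd := congrArg Matrix.det h
    simp [Matrix.det_mul, Matrix.det_transpose, Matrix.det_diagonal, Fin.prod_univ_three] at hd
    have : z.det * z.det = (ι * ι * u) * (ι * ι * u) := by linear_combination hd
    rcases mul_self_eq_mul_self_iff.mp this with h | h <;> rw [h] <;> simp [hσι, huF]
end
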